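/- arXiv:1511.07193 — 2 statements merged into one kernel-verified Lean document; each statement's English description precedes it below -/
import Mathlib

section
/- There exists a constant C > 0 with the following property. Let m ≥ 1, N = 2^m, and k̃ = m − 1. Let u be four times continuously differentiable on a neighbourhood of [0,1]², vanishing on the boundary of [0,1]², and satisfying −Δu + u = f on Ω = (0,1)². Let V^{(k̃)} be the real span of all functions ψ_i^{N/2^l}(x) ψ_j^{N/2^{k̃−l}}(y) for l = 0, 1, …, k̃, 1 ≤ i ≤ N/2^l − 1, 1 ≤ j ≤ N/2^{k̃−l} − 1. If u^{(k̃)} ∈ V^{(k̃)} satisfies B(u^{(k̃)}, v) = (f, v) for all v ∈ V^{(k̃)}, then |||u − u^{(k̃)}||| ≤ C N^{−1} ( |u|₂ + ‖∂⁴u/∂x²∂y²‖_{0,Ω} ). -/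
open MeasureTheory Finset

noncomputable section

/-- The hat function `ψ_i^N` on the uniform mesh of `[0,1]` with `N` intervals. -/
def hat (N i : ℕ) (x : ℝ) : ℝ :=
  if ((i : ℝ) - 1) / N ≤ x ∧ x ≤ (i : ℝ) / N then N * (x - ((i : ℝ) - 1) / N)
  else if (i : ℝ) / N ≤ x ∧ x ≤ ((i : ℝ) + 1) / N then N * (((i : ℝ) + 1) / N - x)
  else 0

/-- The nodal piecewise bilinear interpolant `I_{Nx,Ny} u`. -/
def interp (Nx Ny : ℕ) (u : ℝ × ℝ → ℝ) : ℝ × ℝ → ℝ := fun p =>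
  ∑ i ∈ range (Nx + 1), ∑ j ∈ range (Ny + 1),
    u ((i : ℝ) / Nx, (j : ℝ) / Ny) * hat Nx i p.1 * hat Ny j p.2

/-- The one-directional interpolant `I_{Nx,0} u` (interpolation in the `x`-direction only). -/
def interpX (Nx : ℕ) (u : ℝ × ℝ → ℝ) : ℝ × ℝ → ℝ := fun p =>
  ∑ i ∈ range (Nx + 1), u ((i : ℝ) / Nx, p.2) * hat Nx i p.1

/-- The one-directional interpolant `I_{0,Ny} u` (interpolation in the `y`-direction only). -/
def interpY (Ny : ℕ) (u : ℝ × ℝ → ℝ) : ℝ × ℝ → ℝ := fun p =>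
  ∑ j ∈ range (Ny + 1), u (p.1, (j : ℝ) / Ny) * hat Ny j p.2

/-- The two-scale interpolant `Î_{N,N} u = I_{N,σ}u + I_{σ,N}u − I_{σ,σ}u`. -/
def twoScale (N σ : ℕ) (u : ℝ × ℝ → ℝ) : ℝ × ℝ → ℝ := fun p =>
  interp N σ u p + interp σ N u p - interp σ σ u p

/-- The multiscale interpolant
`I^{(k)}_{N,N} u = Σ_{i=0}^{k} I_{N/2^i, N/2^{k−i}}u − Σ_{i=1}^{k} I_{N/2^i, N/2^{k+1−i}}u`. -/
def msInterp (N k : ℕ) (u : ℝ × ℝ → ℝ) : ℝ × ℝ → ℝ := fun p =>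
  ∑ i ∈ range (k + 1), interp (N / 2 ^ i) (N / 2 ^ (k - i)) u p
    - ∑ i ∈ Finset.Icc 1 k, interp (N / 2 ^ i) (N / 2 ^ (k + 1 - i)) u p

/-- The closed square `[0,1]²`. -/
def unitSquare : Set (ℝ × ℝ) := Set.Icc (0 : ℝ) 1 ×ˢ Set.Icc (0 : ℝ) 1

/-- The open square `Ω = (0,1)²`. -/
def Omega2 : Set (ℝ × ℝ) := Set.Ioo (0 : ℝ) 1 ×ˢ Set.Ioo (0 : ℝ) 1

/-- Partial derivative in `x` (defined a.e. for Lipschitz functions; junk value `0` elsewhere). -/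
def pderivX (v : ℝ × ℝ → ℝ) : ℝ × ℝ → ℝ := fun p => deriv (fun x => v (x, p.2)) p.1

/-- Partial derivative in `y` (defined a.e. for Lipschitz functions; junk value `0` elsewhere). -/
def pderivY (v : ℝ × ℝ → ℝ) : ℝ × ℝ → ℝ := fun p => deriv (fun y => v (p.1, y)) p.2

/-- The `L²(Ω)` norm `‖v‖_{0,Ω}`. -/
def L2norm (v : ℝ × ℝ → ℝ) : ℝ := Real.sqrt (∫ p in Omega2, (v p) ^ 2)

/-- The energy norm `|||v||| = (∫_Ω |∇v|² + ∫_Ω v²)^{1/2}`, gradients taken a.e. -/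
def energyNorm (v : ℝ × ℝ → ℝ) : ℝ :=
  Real.sqrt (∫ p in Omega2, ((pderivX v p) ^ 2 + (pderivY v p) ^ 2 + (v p) ^ 2))

/-- `u` is four times continuously differentiable on a neighbourhood of `[0,1]²`. -/
def C4Near (u : ℝ × ℝ → ℝ) : Prop :=
  ∃ U : Set (ℝ × ℝ), IsOpen U ∧ unitSquare ⊆ U ∧ ContDiffOn ℝ 4 u U

/-- `u` vanishes on the boundary of `[0,1]²`. -/
def VanishOnBoundary (u : ℝ × ℝ → ℝ) : Prop :=
  ∀ p ∈ unitSquare, (p.1 = 0 ∨ p.1 = 1 ∨ p.2 = 0 ∨ p.2 = 1) → u p = 0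

/-- The seminorm `|u|₂ = ‖u_xx‖_{0,Ω} + ‖u_xy‖_{0,Ω} + ‖u_yy‖_{0,Ω}`. -/
def semi2 (u : ℝ × ℝ → ℝ) : ℝ :=
  L2norm (pderivX (pderivX u)) + L2norm (pderivX (pderivY u)) + L2norm (pderivY (pderivY u))

/-- The mixed fourth derivative `∂⁴u/∂x²∂y²`. -/
def uxxyy (u : ℝ × ℝ → ℝ) : ℝ × ℝ → ℝ := pderivX (pderivX (pderivY (pderivY u)))

/-- The bilinear form `B(v,w) = ∫_Ω ∇v·∇w + ∫_Ω v w`, gradients taken a.e. -/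
def Bform (v w : ℝ × ℝ → ℝ) : ℝ :=
  ∫ p in Omega2, (pderivX v p * pderivX w p + pderivY v p * pderivY w p + v p * w p)

/-- The multiscale sparse grid finite element space `V^{(k)}_{N,N}`, spanned by the functions
`ψ_i^{N/2^l}(x) ψ_j^{N/2^{k−l}}(y)` for `l = 0,…,k`, `1 ≤ i ≤ N/2^l − 1`,
`1 ≤ j ≤ N/2^{k−l} − 1`. -/
def msSpace (N k : ℕ) : Submodule ℝ (ℝ × ℝ → ℝ) :=
  Submodule.span ℝ
    {g | ∃ l ∈ Finset.range (k + 1), ∃ i ∈ Finset.Icc 1 (N / 2 ^ l - 1),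
        ∃ j ∈ Finset.Icc 1 (N / 2 ^ (k - l) - 1),
          g = fun p : ℝ × ℝ => hat (N / 2 ^ l) i p.1 * hat (N / 2 ^ (k - l)) j p.2}

/-- The one-dimensional nodal piecewise linear interpolant on the uniform mesh with `n` cells. -/
def nodal (n : ℕ) (g : ℝ → ℝ) (x : ℝ) : ℝ := ∑ i ∈ range (n + 1), g ((i : ℝ) / n) * hat n i x

lemma hat_eq_max {N : ℕ} (hN : 0 < N) (i : ℕ) (x : ℝ) :
    hat N i x = max 0 (1 - |N * x - i|) := by
  have hN' : (0 : ℝ) < N := by exact_mod_cast hN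
  have e1 : ((i : ℝ) - 1) / N ≤ x ↔ (i : ℝ) - 1 ≤ N * x := by rw [div_le_iff₀' hN']
  have e2 : x ≤ (i : ℝ) / N ↔ N * x ≤ i := by rw [le_div_iff₀' hN']
  have e3 : (i : ℝ) / N ≤ x ↔ (i : ℝ) ≤ N * x := by rw [div_le_iff₀' hN']
  have e4 : x ≤ ((i : ℝ) + 1) / N ↔ N * x ≤ i + 1 := by rw [le_div_iff₀' hN']
  have e5 : N * (x - ((i : ℝ) - 1) / N) = N * x - i + 1 := by field_simp; ring
  have e6 : N * (((i : ℝ) + 1) / N - x) = i + 1 - N * x := by field_simp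
  unfold hat
  simp only [e1, e2, e3, e4, e5, e6]
  generalize (N : ℝ) * x = t
  generalize (i : ℝ) = s
  split_ifs with h1 h2
  · rw [abs_of_nonpos (by linarith), max_eq_right (by linarith)]; ring
  · rw [abs_of_nonneg (by linarith), max_eq_right (by linarith)]; ring
  · rw [max_eq_left]
    by_contra! h
    have h' := abs_lt.1 (show |t - s| < 1 by linarith)
    rcases le_total t s with h3 | h3
    · exact h1 ⟨by linarith, h3⟩
    · exact h2 ⟨h3, by linarith⟩

lemma nodal_eq_on_cell {n i : ℕ} (hi : i < n) (g : ℝ → ℝ) {x : ℝ}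
    (hx : x ∈ Set.Icc ((i : ℝ) / n) (((i + 1 : ℕ) : ℝ) / n)) :
    nodal n g x = g ((i : ℝ) / n) +
      (g (((i + 1 : ℕ) : ℝ) / n) - g ((i : ℝ) / n)) * (n * x - i) := by
  have hn : 0 < n := by omega
  have hn' : (0 : ℝ) < n := by exact_mod_cast hn
  obtain ⟨h1, h2⟩ := hx
  rw [div_le_iff₀' hn'] at h1
  rw [le_div_iff₀' hn'] at h2
  push_cast at h2
  unfold nodal
  rw [← Finset.sum_subset (s₁ := {i, i + 1})]
  · rw [Finset.sum_pair (by omega), hat_eq_max hn, hat_eq_max hn]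
    push_cast
    rw [abs_of_nonneg (by linarith), abs_of_nonpos (by linarith), max_eq_right (by linarith),
      max_eq_right (by linarith)]
    ring
  · intro k hk
    simp only [Finset.mem_insert, Finset.mem_singleton] at hk
    simp only [Finset.mem_range]
    omega
  · intro k _ hk
    simp only [Finset.mem_insert, Finset.mem_singleton, not_or] at hk
    rw [hat_eq_max hn, max_eq_left, mul_zero]
    rcases lt_or_gt_of_ne hk.1 with h | h
    · have : (k : ℝ) + 1 ≤ i := by exact_mod_cast h
      have := le_abs_self (n * x - k)
      linarith
    · have : (i : ℝ) + 2 ≤ k := by exact_mod_cast (by omega : i + 2 ≤ k)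
      have := neg_abs_le (n * x - k)
      linarith

lemma sq_intervalIntegral_le {a b : ℝ} (hab : a ≤ b) {f : ℝ → ℝ} (hf : Continuous f) :
    (∫ x in a..b, f x) ^ 2 ≤ (b - a) * ∫ x in a..b, f x ^ 2 := by
  rcases hab.eq_or_lt with rfl | hlt
  · simp
  have hd : 0 < b - a := by linarith
  set I := ∫ x in a..b, f x with hI
  set c := I / (b - a) with hc
  have h0 : 0 ≤ ∫ x in a..b, (f x - c) ^ 2 :=
    intervalIntegral.integral_nonneg hab fun x _ => sq_nonneg _
  have h1 : ∫ x in a..b, (f x - c) ^ 2 = (∫ x in a..b, f x ^ 2) - 2 * c * I + (b - a) * c ^ 2 := by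
    have : ∀ x, (f x - c) ^ 2 = f x ^ 2 - 2 * c * f x + c ^ 2 := fun x => by ring
    simp_rw [this]
    rw [intervalIntegral.integral_add, intervalIntegral.integral_sub,
      intervalIntegral.integral_const_mul, intervalIntegral.integral_const, smul_eq_mul]
    all_goals exact Continuous.intervalIntegrable (by fun_prop) _ _
  have h2 : c * (b - a) = I := by rw [hc]; field_simp
  rw [h1] at h0
  nlinarith

lemma integral_sq_le_of_zero {a b ξ : ℝ} (hξ : ξ ∈ Set.Icc a b) {φ : ℝ → ℝ}
    (hφ : ContDiff ℝ 1 φ) (h0 : φ ξ = 0) :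
    ∫ x in a..b, φ x ^ 2 ≤ (b - a) ^ 2 * ∫ x in a..b, deriv φ x ^ 2 := by
  have hab : a ≤ b := hξ.1.trans hξ.2
  have hd : Continuous (deriv φ) := hφ.continuous_deriv le_rfl
  have hii : ∀ s t, IntervalIntegrable (fun x => deriv φ x ^ 2) volume s t :=
    fun s t => Continuous.intervalIntegrable (by fun_prop) _ _
  set J := ∫ x in a..b, deriv φ x ^ 2 with hJ
  have key : ∀ s t, a ≤ s → s ≤ t → t ≤ b → (φ t - φ s) ^ 2 ≤ (b - a) * J := by
    intro s t h1 h2 h3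
    rw [← intervalIntegral.integral_deriv_eq_sub
      (fun x _ => hφ.differentiable (by norm_num) x) (hd.intervalIntegrable _ _)]
    refine (sq_intervalIntegral_le h2 hd).trans ?_
    have : ∫ x in s..t, deriv φ x ^ 2 ≤ J :=
      intervalIntegral.integral_mono_interval h1 h2 h3
        (Filter.Eventually.of_forall fun x => sq_nonneg _)
        (hii _ _)
    have h4 : 0 ≤ ∫ x in s..t, deriv φ x ^ 2 :=
      intervalIntegral.integral_nonneg h2 fun x _ => sq_nonneg _
    exact mul_le_mul (by linarith) this h4 (by linarith)
  have hb : ∀ x ∈ Set.Icc a b, φ x ^ 2 ≤ (b - a) * J := by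
    intro x hx
    rcases le_total x ξ with h | h
    · have := key x ξ hx.1 h hξ.2
      rw [h0] at this
      simpa using this
    · have := key ξ x hξ.1 h hx.2
      rw [h0] at this
      simpa using this
  calc ∫ x in a..b, φ x ^ 2 ≤ ∫ _ in a..b, (b - a) * J :=
        intervalIntegral.integral_mono_on hab
          (Continuous.intervalIntegrable (by have := hφ.continuous; fun_prop) _ _)
          (by simp) hb
    _ = (b - a) ^ 2 * J := by simp; ring

/-- The remainder of linear interpolation of `g` at `a` and `b`. -/
def linRem (g : ℝ → ℝ) (a b x : ℝ) : ℝ := g x - (g a + (g b - g a) / (b - a) * (x - a))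

lemma deriv_linRem {g : ℝ → ℝ} (hg : Differentiable ℝ g) (a b x : ℝ) :
    deriv (linRem g a b) x = deriv g x - (g b - g a) / (b - a) := by
  have : HasDerivAt (linRem g a b) (deriv g x - (g b - g a) / (b - a)) x := by
    have h := (hg x).hasDerivAt.sub
      ((((hasDerivAt_id x).sub_const a).const_mul ((g b - g a) / (b - a))).const_add (g a))
    rw [mul_one] at h
    exact h
  exact this.deriv

lemma contDiff_linRem {n : WithTop ℕ∞} {g : ℝ → ℝ} (hg : ContDiff ℝ n g) (a b : ℝ) :
    ContDiff ℝ n (linRem g a b) := by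
  unfold linRem; fun_prop

lemma integral_linRem_sq_le {a b : ℝ} (hab : a < b) {g : ℝ → ℝ} (hg : ContDiff ℝ 1 g) :
    ∫ x in a..b, linRem g a b x ^ 2 ≤ (b - a) ^ 2 * ∫ x in a..b, deriv (linRem g a b) x ^ 2 :=
  integral_sq_le_of_zero (ξ := a) ⟨le_rfl, hab.le⟩ (contDiff_linRem hg a b) (by simp [linRem])

lemma integral_deriv_linRem_sq_le_deriv {a b : ℝ} (hab : a < b) {g : ℝ → ℝ}
    (hg : ContDiff ℝ 1 g) :
    ∫ x in a..b, deriv (linRem g a b) x ^ 2 ≤ ∫ x in a..b, deriv g x ^ 2 := by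
  have hd : Continuous (deriv g) := hg.continuous_deriv le_rfl
  have hpos : 0 < b - a := by linarith
  simp_rw [deriv_linRem (hg.differentiable (by norm_num))]
  set c := (g b - g a) / (b - a) with hc
  have hI : ∫ x in a..b, deriv g x = c * (b - a) := by
    rw [intervalIntegral.integral_deriv_eq_sub
      (fun x _ => hg.differentiable (by norm_num) x) (hd.intervalIntegrable _ _), hc]
    field_simp
  have h1 : ∫ x in a..b, (deriv g x - c) ^ 2
      = (∫ x in a..b, deriv g x ^ 2) - 2 * c * (∫ x in a..b, deriv g x) + (b - a) * c ^ 2 := by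
    have : ∀ x, (deriv g x - c) ^ 2 = deriv g x ^ 2 - 2 * c * deriv g x + c ^ 2 :=
      fun x => by ring
    simp_rw [this]
    rw [intervalIntegral.integral_add, intervalIntegral.integral_sub,
      intervalIntegral.integral_const_mul, intervalIntegral.integral_const, smul_eq_mul]
    all_goals exact Continuous.intervalIntegrable (by fun_prop) _ _
  rw [h1, hI]
  nlinarith [sq_nonneg c]

lemma integral_deriv_linRem_sq_le {a b : ℝ} (hab : a < b) {g : ℝ → ℝ} (hg : ContDiff ℝ 2 g) :
    ∫ x in a..b, deriv (linRem g a b) x ^ 2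
      ≤ (b - a) ^ 2 * ∫ x in a..b, deriv (deriv g) x ^ 2 := by
  have hdiff : Differentiable ℝ g := hg.differentiable (by norm_num)
  obtain ⟨ξ, hξ, h⟩ := exists_deriv_eq_slope g hab hdiff.continuous.continuousOn
    hdiff.differentiableOn
  have hC : ContDiff ℝ 1 (deriv (linRem g a b)) :=
    ((contDiff_succ_iff_deriv (n := 1)).1
      (contDiff_linRem (hg.of_le one_add_one_eq_two.le) a b)).2.2
  have h2 := integral_sq_le_of_zero (Set.Ioo_subset_Icc_self hξ) hC
    (by rw [deriv_linRem hdiff, h, sub_self])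
  have h3 : deriv (deriv (linRem g a b)) = deriv (deriv g) := by
    have : deriv (linRem g a b) = fun x => deriv g x - (g b - g a) / (b - a) :=
      funext (deriv_linRem hdiff a b)
    rw [this]
    ext x
    simp
  rwa [h3] at h2

section Cells

variable {n : ℕ} {g : ℝ → ℝ}

lemma sub_nodal_eq_linRem {i : ℕ} (hi : i < n) {x : ℝ}
    (hx : x ∈ Set.Icc ((i : ℝ) / n) (((i + 1 : ℕ) : ℝ) / n)) :
    g x - nodal n g x = linRem g ((i : ℝ) / n) (((i + 1 : ℕ) : ℝ) / n) x := by
  have hn' : (0 : ℝ) < n := by exact_mod_cast (by omega : 0 < n)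
  rw [nodal_eq_on_cell hi g hx, linRem]
  have : (((i + 1 : ℕ) : ℝ) / n) - (i : ℝ) / n = 1 / n := by push_cast; ring
  rw [this]
  field_simp

lemma cell_lt {i : ℕ} (hn : 0 < n) : (i : ℝ) / n < ((i + 1 : ℕ) : ℝ) / n := by
  have hn' : (0 : ℝ) < n := by exact_mod_cast hn
  gcongr
  simp

lemma deriv_sub_nodal_eq {i : ℕ} (hi : i < n) {x : ℝ}
    (hx : x ∈ Set.Ioo ((i : ℝ) / n) (((i + 1 : ℕ) : ℝ) / n)) :
    deriv (fun x => g x - nodal n g x) x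
      = deriv (linRem g ((i : ℝ) / n) (((i + 1 : ℕ) : ℝ) / n)) x := by
  refine Filter.EventuallyEq.deriv_eq ?_
  filter_upwards [isOpen_Ioo.mem_nhds hx] with y hy
  exact sub_nodal_eq_linRem hi (Set.Ioo_subset_Icc_self hy)

lemma integral_cell_sub_nodal {i : ℕ} (hi : i < n) :
    ∫ x in (i : ℝ) / n..((i + 1 : ℕ) : ℝ) / n, (g x - nodal n g x) ^ 2
      = ∫ x in (i : ℝ) / n..((i + 1 : ℕ) : ℝ) / n,
        linRem g ((i : ℝ) / n) (((i + 1 : ℕ) : ℝ) / n) x ^ 2 := by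
  refine intervalIntegral.integral_congr fun x hx => ?_
  rw [Set.uIcc_of_le (cell_lt (by omega)).le] at hx
  simp only [sub_nodal_eq_linRem hi hx]

lemma ae_cell_deriv_sub_nodal {i : ℕ} (hi : i < n) :
    ∀ᵐ x, x ∈ Set.uIoc ((i : ℝ) / n) (((i + 1 : ℕ) : ℝ) / n) →
      deriv (linRem g ((i : ℝ) / n) (((i + 1 : ℕ) : ℝ) / n)) x ^ 2
        = deriv (fun x => g x - nodal n g x) x ^ 2 := by
  filter_upwards [Measure.ae_ne volume (((i + 1 : ℕ) : ℝ) / n)] with x hne hx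
  rw [Set.uIoc_of_le (cell_lt (by omega)).le] at hx
  rw [deriv_sub_nodal_eq hi ⟨hx.1, lt_of_le_of_ne hx.2 hne⟩]

lemma intervalIntegrable_cell_deriv (hg : ContDiff ℝ 1 g) {i : ℕ} (hi : i < n) :
    IntervalIntegrable (fun x => deriv (fun x => g x - nodal n g x) x ^ 2) volume
      ((i : ℝ) / n) (((i + 1 : ℕ) : ℝ) / n) := by
  refine IntervalIntegrable.congr_ae
    (f := fun x => deriv (linRem g ((i : ℝ) / n) (((i + 1 : ℕ) : ℝ) / n)) x ^ 2) ?_ ?_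
  · have := (contDiff_linRem hg ((i : ℝ) / n) (((i + 1 : ℕ) : ℝ) / n)).continuous_deriv le_rfl
    exact Continuous.intervalIntegrable (by fun_prop) _ _
  · exact (ae_restrict_iff' measurableSet_uIoc).2 (ae_cell_deriv_sub_nodal hi)

lemma sum_integral_cells (hn : 0 < n) {F : ℝ → ℝ}
    (hF : ∀ i < n, IntervalIntegrable F volume ((i : ℝ) / n) (((i + 1 : ℕ) : ℝ) / n)) :
    ∑ i ∈ range n, ∫ x in (i : ℝ) / n..((i + 1 : ℕ) : ℝ) / n, F x = ∫ x in (0 : ℝ)..1, F x := by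
  have hn' : (0 : ℝ) < n := by exact_mod_cast hn
  have := intervalIntegral.sum_integral_adjacent_intervals (μ := volume) (f := F)
    (a := fun i : ℕ => (i : ℝ) / n) (n := n) hF
  rw [this]
  simp [hn'.ne']

lemma continuous_hat (hn : 0 < n) (i : ℕ) : Continuous (hat n i) := by
  rw [funext (hat_eq_max hn i)]
  fun_prop

lemma continuous_nodal (hn : 0 < n) : Continuous (nodal n g) := by
  unfold nodal
  have := continuous_hat hn
  fun_prop

lemma cell_length (i : ℕ) : ((i + 1 : ℕ) : ℝ) / n - (i : ℝ) / n = (n : ℝ)⁻¹ := by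
  push_cast; ring

lemma integral_sub_nodal_sq_le (hn : 0 < n) (hg : ContDiff ℝ 1 g) :
    ∫ x in (0 : ℝ)..1, (g x - nodal n g x) ^ 2
      ≤ (n : ℝ)⁻¹ ^ 2 * ∫ x in (0 : ℝ)..1, deriv (fun x => g x - nodal n g x) x ^ 2 := by
  have h1 := hg.continuous
  have h2 := continuous_nodal (g := g) hn
  rw [← sum_integral_cells hn (F := fun x => (g x - nodal n g x) ^ 2)
      fun i _ => Continuous.intervalIntegrable (by fun_prop) _ _,
    ← sum_integral_cells hn fun i hi => intervalIntegrable_cell_deriv hg hi, Finset.mul_sum]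
  refine Finset.sum_le_sum fun i hi => ?_
  have hi' := Finset.mem_range.1 hi
  rw [integral_cell_sub_nodal hi',
    ← intervalIntegral.integral_congr_ae (ae_cell_deriv_sub_nodal hi'), ← cell_length i]
  exact integral_linRem_sq_le (cell_lt hn) hg

lemma integral_deriv_sub_nodal_sq_le_deriv (hn : 0 < n) (hg : ContDiff ℝ 1 g) :
    ∫ x in (0 : ℝ)..1, deriv (fun x => g x - nodal n g x) x ^ 2
      ≤ ∫ x in (0 : ℝ)..1, deriv g x ^ 2 := by
  have h1 := hg.continuous_deriv le_rfl
  rw [← sum_integral_cells hn fun i hi => intervalIntegrable_cell_deriv hg hi,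
    ← sum_integral_cells hn (F := fun x => deriv g x ^ 2)
      fun i _ => Continuous.intervalIntegrable (by fun_prop) _ _]
  refine Finset.sum_le_sum fun i hi => ?_
  rw [← intervalIntegral.integral_congr_ae (ae_cell_deriv_sub_nodal (Finset.mem_range.1 hi))]
  exact integral_deriv_linRem_sq_le_deriv (cell_lt hn) hg

lemma integral_deriv_sub_nodal_sq_le (hn : 0 < n) (hg : ContDiff ℝ 2 g) :
    ∫ x in (0 : ℝ)..1, deriv (fun x => g x - nodal n g x) x ^ 2
      ≤ (n : ℝ)⁻¹ ^ 2 * ∫ x in (0 : ℝ)..1, deriv (deriv g) x ^ 2 := by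
  have h1 : Continuous (deriv (deriv g)) :=
    ((contDiff_succ_iff_deriv (n := 1)).1
      (hg.of_le one_add_one_eq_two.le)).2.2.continuous_deriv le_rfl
  rw [← sum_integral_cells hn fun i hi => intervalIntegrable_cell_deriv
      (hg.of_le (by norm_num)) hi,
    ← sum_integral_cells hn (F := fun x => deriv (deriv g) x ^ 2)
      fun i _ => Continuous.intervalIntegrable (by fun_prop) _ _, Finset.mul_sum]
  refine Finset.sum_le_sum fun i hi => ?_
  rw [← intervalIntegral.integral_congr_ae (ae_cell_deriv_sub_nodal (Finset.mem_range.1 hi)),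
    ← cell_length i]
  exact integral_deriv_linRem_sq_le (cell_lt hn) hg

end Cells

/-- `v` is bounded and Lipschitz on the whole plane. -/
def LipBdd (v : ℝ × ℝ → ℝ) : Prop :=
  ∃ K : ℝ, 0 ≤ K ∧ (∀ p q, |v p - v q| ≤ K * dist p q) ∧ ∀ p, |v p| ≤ K

namespace LipBdd

variable {v w : ℝ × ℝ → ℝ}

lemma exists_lipschitzWith (hv : LipBdd v) : ∃ K, LipschitzWith K v := by
  obtain ⟨K, hK, h, -⟩ := hv
  exact ⟨⟨K, hK⟩, LipschitzWith.of_dist_le_mul h⟩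

lemma continuous (hv : LipBdd v) : Continuous v := by
  obtain ⟨K, hK⟩ := hv.exists_lipschitzWith
  exact hK.continuous

lemma const (c : ℝ) : LipBdd fun _ => c :=
  ⟨|c|, abs_nonneg c, fun p q => by simpa using by positivity, fun _ => le_rfl⟩

lemma add (hv : LipBdd v) (hw : LipBdd w) : LipBdd fun p => v p + w p := by
  obtain ⟨K, hK, h1, h2⟩ := hv
  obtain ⟨L, hL, h3, h4⟩ := hw
  refine ⟨K + L, by positivity, fun p q => ?_, fun p => ?_⟩
  · rw [show v p + w p - (v q + w q) = (v p - v q) + (w p - w q) by ring, add_mul]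
    exact (abs_add_le _ _).trans (add_le_add (h1 p q) (h3 p q))
  · exact (abs_add_le _ _).trans (add_le_add (h2 p) (h4 p))

lemma mul (hv : LipBdd v) (hw : LipBdd w) : LipBdd fun p => v p * w p := by
  obtain ⟨K, hK, h1, h2⟩ := hv
  obtain ⟨L, hL, h3, h4⟩ := hw
  refine ⟨2 * (K * L) + K * L, by positivity, fun p q => ?_, fun p => ?_⟩
  · rw [show v p * w p - v q * w q = v p * (w p - w q) + (v p - v q) * w q by ring]
    refine (abs_add_le _ _).trans ?_
    rw [abs_mul, abs_mul]
    have e1 : |v p| * |w p - w q| ≤ K * (L * dist p q) :=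
      mul_le_mul (h2 p) (h3 p q) (abs_nonneg _) hK
    have e2 : |v p - v q| * |w q| ≤ K * dist p q * L :=
      mul_le_mul (h1 p q) (h4 q) (abs_nonneg _) (by positivity)
    have e3 : 0 ≤ K * L * dist p q := by positivity
    nlinarith
  · rw [abs_mul]
    have := mul_le_mul (h2 p) (h4 p) (abs_nonneg _) hK
    nlinarith [mul_nonneg hK hL]

lemma sub (hv : LipBdd v) (hw : LipBdd w) : LipBdd fun p => v p - w p := by
  have := hv.add ((const (-1)).mul hw)
  simpa [sub_eq_add_neg] using this

lemma sum {ι : Type*} (s : Finset ι) {F : ι → ℝ × ℝ → ℝ} (hF : ∀ i ∈ s, LipBdd (F i)) :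
    LipBdd fun p => ∑ i ∈ s, F i p := by
  classical
  induction s using Finset.induction_on with
  | empty => simpa using const 0
  | insert a s ha ih =>
    simp_rw [Finset.sum_insert ha]
    exact (hF a (by simp)).add (ih fun i hi => hF i (by simp [hi]))

lemma of_contDiff (hv : ContDiff ℝ 1 v) (hs : HasCompactSupport v) : LipBdd v := by
  obtain ⟨K, hK⟩ := hv.lipschitzWith_of_hasCompactSupport hs (by norm_num)
  obtain ⟨M, hM⟩ := hs.exists_bound_of_continuous hv.continuous
  have hM0 : 0 ≤ M := (norm_nonneg _).trans (hM 0)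
  refine ⟨K + M, by positivity, fun p q => ?_, fun p => ?_⟩
  · have := hK.dist_le_mul p q
    rw [Real.dist_eq] at this
    nlinarith [dist_nonneg (x := p) (y := q)]
  · have := hM p
    rw [Real.norm_eq_abs] at this
    linarith [K.coe_nonneg]

lemma comp_swap (hv : LipBdd v) : LipBdd (v ∘ Prod.swap) := by
  obtain ⟨K, hK, h1, h2⟩ := hv
  refine ⟨K, hK, fun p q => (h1 _ _).trans_eq ?_, fun p => h2 _⟩
  simp [Prod.dist_eq, max_comm]

lemma slice_fst (hv : LipBdd v) (c : ℝ) : LipBdd fun p => v (c, p.2) := by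
  obtain ⟨K, hK, h1, h2⟩ := hv
  refine ⟨K, hK, fun p q => (h1 _ _).trans ?_, fun p => h2 _⟩
  gcongr
  simp [Prod.dist_eq]

lemma slice_snd (hv : LipBdd v) (c : ℝ) : LipBdd fun p => v (p.1, c) := by
  obtain ⟨K, hK, h1, h2⟩ := hv
  refine ⟨K, hK, fun p q => (h1 _ _).trans ?_, fun p => h2 _⟩
  gcongr
  simp [Prod.dist_eq]

lemma hat_fst {n : ℕ} (hn : 0 < n) (i : ℕ) : LipBdd fun p => hat n i p.1 := by
  have hn1 : (1 : ℝ) ≤ n := by exact_mod_cast hn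
  refine ⟨n, by positivity, fun p q => ?_, fun p => ?_⟩
  · simp only [hat_eq_max hn]
    have h1 := abs_max_sub_max_le_abs (1 - |n * p.1 - i|) (1 - |n * q.1 - i|) 0
    rw [max_comm 0, max_comm 0]
    refine h1.trans ?_
    have h3 := abs_abs_sub_abs_le_abs_sub (n * q.1 - i) (n * p.1 - i)
    rw [sub_sub_sub_cancel_left]
    refine h3.trans ?_
    rw [abs_sub_comm]
    rw [show n * p.1 - i - (n * q.1 - i) = n * (p.1 - q.1) by ring, abs_mul, Nat.abs_cast,
      ← Real.dist_eq]
    gcongr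
    exact le_max_left _ _
  · simp only [hat_eq_max hn]
    rw [abs_of_nonneg (le_max_left _ _)]
    refine max_le (by positivity) ?_
    linarith [abs_nonneg (n * p.1 - i)]

lemma hat_snd {n : ℕ} (hn : 0 < n) (i : ℕ) : LipBdd fun p => hat n i p.2 :=
  (hat_fst hn i).comp_swap

lemma interpX {n : ℕ} (hn : 0 < n) (hv : LipBdd v) : LipBdd (interpX n v) :=
  sum _ fun i _ => (hv.slice_fst _).mul (hat_fst hn i)

lemma interpY {n : ℕ} (hn : 0 < n) (hv : LipBdd v) : LipBdd (interpY n v) :=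
  sum _ fun i _ => (hv.slice_snd _).mul (hat_snd hn i)

lemma measurable_pderivY (hv : LipBdd v) : Measurable (pderivY v) :=
  measurable_deriv_with_param (f := fun x y => v (x, y)) hv.continuous

lemma measurable_pderivX (hv : LipBdd v) : Measurable (pderivX v) :=
  hv.comp_swap.measurable_pderivY.comp measurable_swap

lemma pderivX_bound (hv : LipBdd v) : ∃ M, ∀ p, |pderivX v p| ≤ M := by
  obtain ⟨K, hK, h1, h2⟩ := hv
  refine ⟨K, fun p => ?_⟩
  refine norm_deriv_le_of_lipschitz (f := fun x => v (x, p.2)) (C := ⟨K, hK⟩)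
    (LipschitzWith.of_dist_le_mul fun x y => ?_)
  refine (h1 _ _).trans_eq ?_
  rw [Prod.dist_eq, dist_self, max_eq_left dist_nonneg]
  rfl

lemma pderivY_bound (hv : LipBdd v) : ∃ M, ∀ p, |pderivY v p| ≤ M := by
  obtain ⟨M, hM⟩ := hv.comp_swap.pderivX_bound
  exact ⟨M, fun p => hM p.swap⟩

lemma ae_differentiableAt (hv : LipBdd v) : ∀ᵐ p, DifferentiableAt ℝ v p := by
  obtain ⟨K, hK⟩ := hv.exists_lipschitzWith
  exact hK.ae_differentiableAt

end LipBdd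

section PartialDerivatives

variable {v w : ℝ × ℝ → ℝ} {p : ℝ × ℝ}

lemma DifferentiableAt.hasDerivAt_fst (hv : DifferentiableAt ℝ v p) :
    HasDerivAt (fun x => v (x, p.2)) (fderiv ℝ v p (1, 0)) p.1 :=
  HasFDerivAt.comp_hasDerivAt (f := fun x : ℝ => (x, p.2)) p.1 hv.hasFDerivAt
    ((hasDerivAt_id p.1).prodMk (hasDerivAt_const p.1 p.2))

lemma DifferentiableAt.hasDerivAt_snd (hv : DifferentiableAt ℝ v p) :
    HasDerivAt (fun y => v (p.1, y)) (fderiv ℝ v p (0, 1)) p.2 :=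
  HasFDerivAt.comp_hasDerivAt (f := fun y : ℝ => (p.1, y)) p.2 hv.hasFDerivAt
    ((hasDerivAt_const p.2 p.1).prodMk (hasDerivAt_id p.2))

lemma pderivX_eq_fderiv (hv : DifferentiableAt ℝ v p) : pderivX v p = fderiv ℝ v p (1, 0) :=
  hv.hasDerivAt_fst.deriv

lemma pderivY_eq_fderiv (hv : DifferentiableAt ℝ v p) : pderivY v p = fderiv ℝ v p (0, 1) :=
  hv.hasDerivAt_snd.deriv

lemma pderivX_congr {U : Set (ℝ × ℝ)} (hU : IsOpen U) (h : Set.EqOn v w U) :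
    Set.EqOn (pderivX v) (pderivX w) U := by
  intro p hp
  refine Filter.EventuallyEq.deriv_eq ?_
  have hc : Continuous fun x : ℝ => (x, p.2) := by fun_prop
  filter_upwards [(hU.preimage hc).mem_nhds hp] with x hx using h hx

lemma pderivY_congr {U : Set (ℝ × ℝ)} (hU : IsOpen U) (h : Set.EqOn v w U) :
    Set.EqOn (pderivY v) (pderivY w) U := by
  intro p hp
  refine Filter.EventuallyEq.deriv_eq ?_
  have hc : Continuous fun y : ℝ => (p.1, y) := by fun_prop
  filter_upwards [(hU.preimage hc).mem_nhds hp] with x hx using h hx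

lemma LipBdd.pderivX_add_ae (hv : LipBdd v) (hw : LipBdd w) :
    pderivX (fun p => v p + w p) =ᵐ[volume] fun p => pderivX v p + pderivX w p := by
  filter_upwards [hv.ae_differentiableAt, hw.ae_differentiableAt] with p h1 h2
  exact deriv_add h1.hasDerivAt_fst.differentiableAt h2.hasDerivAt_fst.differentiableAt

lemma LipBdd.pderivY_add_ae (hv : LipBdd v) (hw : LipBdd w) :
    pderivY (fun p => v p + w p) =ᵐ[volume] fun p => pderivY v p + pderivY w p := by
  filter_upwards [hv.ae_differentiableAt, hw.ae_differentiableAt] with p h1 h2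
  exact deriv_add h1.hasDerivAt_snd.differentiableAt h2.hasDerivAt_snd.differentiableAt

lemma LipBdd.pderivX_sub_ae (hv : LipBdd v) (hw : LipBdd w) :
    pderivX (fun p => v p - w p) =ᵐ[volume] fun p => pderivX v p - pderivX w p := by
  filter_upwards [hv.ae_differentiableAt, hw.ae_differentiableAt] with p h1 h2
  exact deriv_sub h1.hasDerivAt_fst.differentiableAt h2.hasDerivAt_fst.differentiableAt

lemma LipBdd.pderivY_sub_ae (hv : LipBdd v) (hw : LipBdd w) :
    pderivY (fun p => v p - w p) =ᵐ[volume] fun p => pderivY v p - pderivY w p := by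
  filter_upwards [hv.ae_differentiableAt, hw.ae_differentiableAt] with p h1 h2
  exact deriv_sub h1.hasDerivAt_snd.differentiableAt h2.hasDerivAt_snd.differentiableAt

end PartialDerivatives

section L2

lemma isOpen_Omega2 : IsOpen Omega2 := isOpen_Ioo.prod isOpen_Ioo

lemma measurableSet_Omega2 : MeasurableSet Omega2 := isOpen_Omega2.measurableSet

lemma Omega2_subset : Omega2 ⊆ unitSquare :=
  Set.prod_mono Set.Ioo_subset_Icc_self Set.Ioo_subset_Icc_self

lemma isCompact_unitSquare : IsCompact unitSquare := isCompact_Icc.prod isCompact_Icc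

lemma Omega2_ae_eq : (Omega2 : Set (ℝ × ℝ)) =ᵐ[volume] unitSquare :=
  Measure.set_prod_ae_eq Ioo_ae_eq_Icc Ioo_ae_eq_Icc

instance isFiniteMeasure_Omega2 : IsFiniteMeasure (volume.restrict Omega2) :=
  ⟨by
    rw [Measure.restrict_apply_univ]
    exact (measure_mono Omega2_subset).trans_lt isCompact_unitSquare.measure_lt_top⟩

/-- Square integrability on the open unit square. -/
abbrev SqInt (F : ℝ × ℝ → ℝ) : Prop := MemLp F 2 (volume.restrict Omega2)

variable {v w F G : ℝ × ℝ → ℝ}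

lemma sqInt_of_continuous (hF : Continuous F) : SqInt F := by
  obtain ⟨M, hM⟩ := isCompact_unitSquare.exists_bound_of_continuousOn hF.continuousOn
  refine MemLp.of_bound hF.aestronglyMeasurable M ?_
  filter_upwards [ae_restrict_mem measurableSet_Omega2] with p hp using hM p (Omega2_subset hp)

lemma LipBdd.sqInt (hv : LipBdd v) : SqInt v := sqInt_of_continuous hv.continuous

lemma LipBdd.sqInt_pderivX (hv : LipBdd v) : SqInt (pderivX v) := by
  obtain ⟨M, hM⟩ := hv.pderivX_bound
  exact MemLp.of_bound hv.measurable_pderivX.aestronglyMeasurable M (Filter.Eventually.of_forall hM)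

lemma LipBdd.sqInt_pderivY (hv : LipBdd v) : SqInt (pderivY v) := by
  obtain ⟨M, hM⟩ := hv.pderivY_bound
  exact MemLp.of_bound hv.measurable_pderivY.aestronglyMeasurable M (Filter.Eventually.of_forall hM)

lemma L2norm_nonneg (F : ℝ × ℝ → ℝ) : 0 ≤ L2norm F := Real.sqrt_nonneg _

lemma L2norm_sq (F : ℝ × ℝ → ℝ) : L2norm F ^ 2 = ∫ p in Omega2, F p ^ 2 :=
  Real.sq_sqrt (integral_nonneg fun _ => sq_nonneg _)

lemma L2norm_congr_ae (h : F =ᵐ[volume.restrict Omega2] G) : L2norm F = L2norm G := by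
  unfold L2norm
  congr 1
  refine integral_congr_ae ?_
  filter_upwards [h] with p hp
  rw [hp]

lemma L2norm_congr (h : Set.EqOn F G Omega2) : L2norm F = L2norm G :=
  L2norm_congr_ae ((ae_restrict_mem measurableSet_Omega2).mono h)

lemma L2norm_eq_eLpNorm (hF : SqInt F) :
    L2norm F = (eLpNorm F 2 (volume.restrict Omega2)).toReal := by
  rw [hF.eLpNorm_eq_integral_rpow_norm (by norm_num) (by norm_num), ENNReal.toReal_ofReal
    (by positivity), L2norm, Real.sqrt_eq_rpow]
  norm_num

lemma L2norm_add_le (hF : SqInt F) (hG : SqInt G) :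
    L2norm (fun p => F p + G p) ≤ L2norm F + L2norm G := by
  change L2norm (F + G) ≤ _
  rw [L2norm_eq_eLpNorm hF, L2norm_eq_eLpNorm hG, L2norm_eq_eLpNorm (hF.add hG),
    ← ENNReal.toReal_add hF.eLpNorm_ne_top hG.eLpNorm_ne_top]
  exact ENNReal.toReal_mono (by finiteness [hF.eLpNorm_ne_top, hG.eLpNorm_ne_top])
    (eLpNorm_add_le hF.1 hG.1 (by norm_num))

lemma L2norm_sub_le (hF : SqInt F) (hG : SqInt G) :
    L2norm (fun p => F p - G p) ≤ L2norm F + L2norm G := by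
  have h := L2norm_add_le hF hG.neg
  have h2 : L2norm (-G) = L2norm G := by simp [L2norm]
  rw [h2] at h
  simpa [sub_eq_add_neg] using h

lemma integral_Omega2_swap (F : ℝ × ℝ → ℝ) :
    ∫ p in Omega2, F p.swap = ∫ p in Omega2, F p := by
  unfold Omega2
  exact setIntegral_prod_swap _ _ F

lemma L2norm_comp_swap (F : ℝ × ℝ → ℝ) : L2norm (F ∘ Prod.swap) = L2norm F := by
  unfold L2norm
  congr 1
  exact integral_Omega2_swap fun p => F p ^ 2

lemma integral_Omega2_eq (hF : IntegrableOn F Omega2) :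
    ∫ p in Omega2, F p = ∫ y in Set.Ioo (0 : ℝ) 1, ∫ x in (0 : ℝ)..1, F (x, y) := by
  simp_rw [intervalIntegral.integral_of_le zero_le_one, integral_Ioc_eq_integral_Ioo]
  rw [← integral_Omega2_swap F]
  exact setIntegral_prod (fun p : ℝ × ℝ => F p.swap) (IntegrableOn.swap hF)

lemma integrableOn_slices (hF : IntegrableOn F Omega2) :
    IntegrableOn (fun y => ∫ x in (0 : ℝ)..1, F (x, y)) (Set.Ioo 0 1) := by
  simp_rw [intervalIntegral.integral_of_le zero_le_one, integral_Ioc_eq_integral_Ioo]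
  have h : IntegrableOn (F ∘ Prod.swap) (Set.Ioo (0 : ℝ) 1 ×ˢ Set.Ioo (0 : ℝ) 1)
      (volume.prod volume) := IntegrableOn.swap hF
  rw [IntegrableOn, ← Measure.prod_restrict] at h
  exact h.integral_prod_left

/-- A slicewise bound of squared integrals yields a bound of `L²` norms. -/
lemma L2norm_le_of_slices (hF : SqInt F) (hG : SqInt G) {c : ℝ} (hc : 0 ≤ c)
    (h : ∀ y, ∫ x in (0 : ℝ)..1, F (x, y) ^ 2 ≤ c ^ 2 * ∫ x in (0 : ℝ)..1, G (x, y) ^ 2) :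
    L2norm F ≤ c * L2norm G := by
  have h1 : IntegrableOn (fun p => F p ^ 2) Omega2 := hF.integrable_sq
  have h2 : IntegrableOn (fun p => G p ^ 2) Omega2 := hG.integrable_sq
  refine le_of_sq_le_sq ?_ (mul_nonneg hc (L2norm_nonneg G))
  rw [mul_pow, L2norm_sq, L2norm_sq, integral_Omega2_eq h1, integral_Omega2_eq h2,
    ← integral_const_mul]
  exact integral_mono (integrableOn_slices h1) ((integrableOn_slices h2).const_mul _) h

end L2

section Energy

variable {u v w : ℝ × ℝ → ℝ}

lemma energyNorm_sq (hv : LipBdd v) :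
    energyNorm v ^ 2 = L2norm (pderivX v) ^ 2 + L2norm (pderivY v) ^ 2 + L2norm v ^ 2 := by
  rw [energyNorm, Real.sq_sqrt (integral_nonneg fun _ => by positivity), L2norm_sq, L2norm_sq,
    L2norm_sq, integral_add _ hv.sqInt.integrable_sq,
    integral_add hv.sqInt_pderivX.integrable_sq hv.sqInt_pderivY.integrable_sq]
  exact hv.sqInt_pderivX.integrable_sq.add hv.sqInt_pderivY.integrable_sq

lemma energyNorm_le (hv : LipBdd v) :
    energyNorm v ≤ L2norm (pderivX v) + L2norm (pderivY v) + L2norm v := by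
  have h1 := L2norm_nonneg (pderivX v)
  have h2 := L2norm_nonneg (pderivY v)
  have h3 := L2norm_nonneg v
  refine le_of_sq_le_sq ?_ (by positivity)
  rw [energyNorm_sq hv]
  nlinarith [mul_nonneg h1 h2, mul_nonneg h1 h3, mul_nonneg h2 h3]

lemma energyNorm_congr (h : Set.EqOn v w Omega2) : energyNorm v = energyNorm w := by
  unfold energyNorm
  congr 1
  refine setIntegral_congr_fun measurableSet_Omega2 fun p hp => ?_
  simp only [h hp, pderivX_congr isOpen_Omega2 h hp, pderivY_congr isOpen_Omega2 h hp]

lemma Bform_integrable (hv : LipBdd v) (hw : LipBdd w) :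
    Integrable (fun p => pderivX v p * pderivX w p + pderivY v p * pderivY w p + v p * w p)
      (volume.restrict Omega2) :=
  ((hv.sqInt_pderivX.integrable_mul hw.sqInt_pderivX).add
    (hv.sqInt_pderivY.integrable_mul hw.sqInt_pderivY)).add (hv.sqInt.integrable_mul hw.sqInt)

lemma Bform_sub_left (hu : LipBdd u) (hv : LipBdd v) (hw : LipBdd w) :
    Bform (fun p => u p - v p) w = Bform u w - Bform v w := by
  unfold Bform
  rw [← integral_sub (Bform_integrable hu hw) (Bform_integrable hv hw)]
  refine integral_congr_ae (ae_restrict_of_ae ?_)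
  filter_upwards [hu.pderivX_sub_ae hv, hu.pderivY_sub_ae hv] with p h1 h2
  rw [h1, h2]
  ring

lemma energyNorm_add_sq (hv : LipBdd v) (hw : LipBdd w) :
    energyNorm (fun p => v p + w p) ^ 2
      = energyNorm v ^ 2 + 2 * Bform v w + energyNorm w ^ 2 := by
  have hB : ∀ {z : ℝ × ℝ → ℝ}, energyNorm z ^ 2 = Bform z z := fun {z} => by
    rw [energyNorm, Real.sq_sqrt (integral_nonneg fun _ => by positivity), Bform]
    simp only [sq]
  rw [hB, hB, hB]
  unfold Bform
  rw [← integral_const_mul, ← integral_add (Bform_integrable hv hv)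
    ((Bform_integrable hv hw).const_mul 2), ← integral_add _ (Bform_integrable hw hw)]
  · refine integral_congr_ae (ae_restrict_of_ae ?_)
    filter_upwards [hv.pderivX_add_ae hw, hv.pderivY_add_ae hw] with p h1 h2
    rw [h1, h2]
    ring
  · exact (Bform_integrable hv hv).add ((Bform_integrable hv hw).const_mul 2)

/-- Quasi-optimality of Galerkin approximations. -/
lemma energyNorm_le_of_orthogonal (hu : LipBdd u) (hv : LipBdd v) (hw : LipBdd w)
    (h : Bform (fun p => u p - v p) (fun p => v p - w p) = 0) :
    energyNorm (fun p => u p - v p) ≤ energyNorm (fun p => u p - w p) := by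
  have h1 := energyNorm_add_sq (hu.sub hv) (hv.sub hw)
  simp only [sub_add_sub_cancel] at h1
  refine le_of_sq_le_sq ?_ (Real.sqrt_nonneg _)
  rw [h1, h]
  nlinarith [sq_nonneg (energyNorm fun p => v p - w p)]

end Energy

section Smooth

variable {u v : ℝ × ℝ → ℝ} {n : WithTop ℕ∞}

lemma pderivX_eq_fun (hu : Differentiable ℝ u) : pderivX u = fun p => fderiv ℝ u p (1, 0) :=
  funext fun p => pderivX_eq_fderiv (hu p)

lemma pderivY_eq_fun (hu : Differentiable ℝ u) : pderivY u = fun p => fderiv ℝ u p (0, 1) :=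
  funext fun p => pderivY_eq_fderiv (hu p)

lemma ContDiff.pderivX (hu : ContDiff ℝ (n + 1) u) : ContDiff ℝ n (pderivX u) := by
  rw [pderivX_eq_fun (hu.differentiable (by simp))]
  exact (hu.fderiv_right le_rfl).clm_apply contDiff_const

lemma ContDiff.pderivY (hu : ContDiff ℝ (n + 1) u) : ContDiff ℝ n (pderivY u) := by
  rw [pderivY_eq_fun (hu.differentiable (by simp))]
  exact (hu.fderiv_right le_rfl).clm_apply contDiff_const

lemma HasCompactSupport.pderivX (hs : HasCompactSupport u) (hu : Differentiable ℝ u) :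
    HasCompactSupport (pderivX u) := by
  rw [pderivX_eq_fun hu]
  exact hs.fderiv_apply ℝ (1, 0)

lemma HasCompactSupport.pderivY (hs : HasCompactSupport u) (hu : Differentiable ℝ u) :
    HasCompactSupport (pderivY u) := by
  rw [pderivY_eq_fun hu]
  exact hs.fderiv_apply ℝ (0, 1)

lemma pderivX_pderivY_comm (hu : ContDiff ℝ 2 u) :
    pderivX (pderivY u) = pderivY (pderivX u) := by
  have hd : Differentiable ℝ u := hu.differentiable (by norm_num)
  have hu' : ContDiff ℝ (1 + 1) u := hu.of_le one_add_one_eq_two.le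
  have hd1 : Differentiable ℝ (pderivX u) := hu'.pderivX.differentiable (by norm_num)
  have hd2 : Differentiable ℝ (pderivY u) := hu'.pderivY.differentiable (by norm_num)
  have hf : Differentiable ℝ (fderiv ℝ u) :=
    (hu'.fderiv_right le_rfl).differentiable (by norm_num)
  ext p
  rw [pderivX_eq_fderiv (hd2 p), pderivY_eq_fderiv (hd1 p), pderivX_eq_fun hd, pderivY_eq_fun hd,
    fderiv_clm_apply (hf p) (differentiableAt_const _),
    fderiv_clm_apply (hf p) (differentiableAt_const _)]
  simpa using hu.contDiffAt.isSymmSndFDerivAt (by simp) (1, 0) (0, 1)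

lemma uxxyy_eq (hu : ContDiff ℝ 4 u) :
    uxxyy u = pderivY (pderivY (pderivX (pderivX u))) := by
  have h3 : ContDiff ℝ (3 + 1) u := hu.of_le (by norm_num)
  have h2 : ContDiff ℝ (2 + 1) (pderivY u) := h3.pderivY.of_le (by norm_num)
  have h2' : ContDiff ℝ (2 + 1) (pderivX u) := h3.pderivX.of_le (by norm_num)
  unfold uxxyy
  rw [pderivX_pderivY_comm (h3.pderivY.of_le (by norm_num)),
    pderivX_pderivY_comm (hu.of_le (by norm_num)),
    pderivX_pderivY_comm h2'.pderivY,
    pderivX_pderivY_comm (h2'.of_le (by norm_num))]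

end Smooth

section WeakForm

variable {u v : ℝ × ℝ → ℝ}

lemma integral_pderivX_mul_eq (hu : LipBdd u) (hv : LipBdd v)
    (h0 : ∀ p, p ∉ Omega2 → v p = 0) :
    ∫ p in Omega2, u p * pderivX v p = -∫ p in Omega2, pderivX u p * v p := by
  have hsq : ∀ p, p ∉ unitSquare → v p = 0 := fun p hp => h0 p fun h => hp (Omega2_subset h)
  have hs : HasCompactSupport v := HasCompactSupport.intro isCompact_unitSquare hsq
  obtain ⟨K, hK⟩ := hu.exists_lipschitzWith
  obtain ⟨L, hL⟩ := hv.exists_lipschitzWith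
  have hx0 : ∀ p, p ∉ unitSquare → pderivX v p = 0 := by
    intro p hp
    have h := pderivX_congr (w := fun _ => (0 : ℝ))
      isCompact_unitSquare.isClosed.isOpen_compl hsq hp
    rw [h]
    simp [pderivX]
  have key := hK.integral_lineDeriv_mul_eq (μ := volume) hL hs ((1, 0) : ℝ × ℝ)
  have e1 : ∫ p, lineDeriv ℝ u p (1, 0) * v p = ∫ p in Omega2, pderivX u p * v p := by
    rw [setIntegral_eq_integral_of_forall_compl_eq_zero fun p hp => by rw [h0 p hp, mul_zero]]
    refine integral_congr_ae ?_
    filter_upwards [hu.ae_differentiableAt] with p hp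
    rw [hp.lineDeriv_eq_fderiv, pderivX_eq_fderiv hp]
  have e2 : ∫ p, lineDeriv ℝ v p (-(1, 0)) * u p = -∫ p in Omega2, u p * pderivX v p := by
    rw [setIntegral_congr_set Omega2_ae_eq, setIntegral_eq_integral_of_forall_compl_eq_zero
      fun p hp => by rw [hx0 p hp, mul_zero], ← integral_neg]
    refine integral_congr_ae ?_
    filter_upwards [hv.ae_differentiableAt] with p hp
    rw [hp.lineDeriv_eq_fderiv, pderivX_eq_fderiv hp, map_neg]
    ring
  rw [e1, e2] at key
  linarith

lemma swap_mem_Omega2 {p : ℝ × ℝ} : p.swap ∈ Omega2 ↔ p ∈ Omega2 := by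
  simp [Omega2, and_comm]

lemma integral_pderivY_mul_eq (hu : LipBdd u) (hv : LipBdd v)
    (h0 : ∀ p, p ∉ Omega2 → v p = 0) :
    ∫ p in Omega2, u p * pderivY v p = -∫ p in Omega2, pderivY u p * v p := by
  have h := integral_pderivX_mul_eq hu.comp_swap hv.comp_swap
    fun p hp => h0 _ (by rwa [swap_mem_Omega2])
  rw [← integral_Omega2_swap fun p => u p * pderivY v p,
    ← integral_Omega2_swap fun p => pderivY u p * v p]
  exact h

/-- Green's formula for the form `B`. -/
lemma Bform_eq_of_strong (hu : ContDiff ℝ 2 u) (hs : HasCompactSupport u) {f : ℝ × ℝ → ℝ}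
    (hf : ∀ p ∈ Omega2, -(pderivX (pderivX u) p + pderivY (pderivY u) p) + u p = f p)
    (hv : LipBdd v) (h0 : ∀ p, p ∉ Omega2 → v p = 0) :
    Bform u v = ∫ p in Omega2, f p * v p := by
  have hu' : ContDiff ℝ (1 + 1) u := hu.of_le one_add_one_eq_two.le
  have hd : Differentiable ℝ u := hu.differentiable (by norm_num)
  have lu : LipBdd u := .of_contDiff (hu.of_le (by norm_num)) hs
  have lx : LipBdd (pderivX u) := .of_contDiff hu'.pderivX (hs.pderivX hd)
  have ly : LipBdd (pderivY u) := .of_contDiff hu'.pderivY (hs.pderivY hd)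
  have ix := lx.sqInt_pderivX.integrable_mul hv.sqInt
  have iy := ly.sqInt_pderivY.integrable_mul hv.sqInt
  have i0 := lu.sqInt.integrable_mul hv.sqInt
  have jx := lx.sqInt.integrable_mul hv.sqInt_pderivX
  have jy := ly.sqInt.integrable_mul hv.sqInt_pderivY
  have hL : Bform u v = (∫ p in Omega2, pderivX u p * pderivX v p)
      + (∫ p in Omega2, pderivY u p * pderivY v p) + ∫ p in Omega2, u p * v p :=
    (integral_add (jx.add jy) i0).trans (congrArg (· + _) (integral_add jx jy))
  have hR : ∫ p in Omega2, f p * v p = -(∫ p in Omega2, pderivX (pderivX u) p * v p)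
      + -(∫ p in Omega2, pderivY (pderivY u) p * v p) + ∫ p in Omega2, u p * v p := by
    have h : ∀ p ∈ Omega2, f p * v p
        = (-(pderivX (pderivX u) * v) + -(pderivY (pderivY u) * v) + u * v) p := fun p hp => by
      simp only [← hf p hp, Pi.add_apply, Pi.neg_apply, Pi.mul_apply]
      ring
    rw [setIntegral_congr_fun measurableSet_Omega2 h, integral_add' (ix.neg.add iy.neg) i0,
      integral_add' ix.neg iy.neg, integral_neg', integral_neg']
    rfl
  rw [hL, hR, integral_pderivX_mul_eq lx hv h0, integral_pderivY_mul_eq ly hv h0]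

end WeakForm

/-- A function smooth near the closed square agrees there with a compactly supported one. -/
lemma C4Near.exists_extension {u : ℝ × ℝ → ℝ} (hu : C4Near u) :
    ∃ w : ℝ × ℝ → ℝ, ContDiff ℝ 4 w ∧ HasCompactSupport w ∧ Set.EqOn u w unitSquare := by
  obtain ⟨U, hU, hsub, hC⟩ := hu
  obtain ⟨K, hK, hSK, hKU⟩ := exists_compact_between isCompact_unitSquare hU hsub
  obtain ⟨χ, h1, h0, -⟩ := exists_contMDiffMap_one_nhds_of_subset_interior
    (n := 4) (modelWithCornersSelf ℝ (ℝ × ℝ)) isCompact_unitSquare.isClosed hSK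
  have hχ : ContDiff ℝ 4 χ := χ.contMDiff.contDiff
  refine ⟨fun p => χ p * u p, ?_, HasCompactSupport.intro hK fun p hp => by simp [h0 p hp], ?_⟩
  · rw [contDiff_iff_contDiffAt]
    intro p
    by_cases hp : p ∈ K
    · exact hχ.contDiffAt.mul (hC.contDiffAt (hU.mem_nhds (hKU hp)))
    · refine (contDiffAt_const (c := (0 : ℝ))).congr_of_eventuallyEq ?_
      filter_upwards [hK.isClosed.isOpen_compl.mem_nhds hp] with q hq
      simp [h0 q hq]
  · intro p hp
    simp [h1.self_of_nhdsSet p hp]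

/-- The remainder of interpolation in the `x`-direction. -/
def remX (n : ℕ) (w : ℝ × ℝ → ℝ) : ℝ × ℝ → ℝ := fun p => w p - interpX n w p

/-- The remainder of interpolation in the `y`-direction. -/
def remY (n : ℕ) (w : ℝ × ℝ → ℝ) : ℝ × ℝ → ℝ := fun p => w p - interpY n w p

section Remainders

variable {n k : ℕ} {u w : ℝ × ℝ → ℝ}

lemma LipBdd.remX (hn : 0 < n) (hw : LipBdd w) : LipBdd (remX n w) := hw.sub (hw.interpX hn)

lemma LipBdd.remY (hn : 0 < n) (hw : LipBdd w) : LipBdd (remY n w) := hw.sub (hw.interpY hn)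

lemma L2norm_remX_le (hn : 0 < n) (hw : LipBdd w)
    (hs : ∀ y, ContDiff ℝ 1 fun x => w (x, y)) :
    L2norm (remX n w) ≤ (n : ℝ)⁻¹ * L2norm (pderivX (remX n w)) :=
  L2norm_le_of_slices (hw.remX hn).sqInt (hw.remX hn).sqInt_pderivX (by positivity)
    fun y => integral_sub_nodal_sq_le hn (hs y)

lemma L2norm_pderivX_remX_le_pderivX (hn : 0 < n) (hw : LipBdd w)
    (hs : ∀ y, ContDiff ℝ 1 fun x => w (x, y)) :
    L2norm (pderivX (remX n w)) ≤ L2norm (pderivX w) := by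
  have h := L2norm_le_of_slices (c := 1) (hw.remX hn).sqInt_pderivX hw.sqInt_pderivX zero_le_one
    fun y => by
      rw [one_pow, one_mul]
      exact integral_deriv_sub_nodal_sq_le_deriv hn (hs y)
  rwa [one_mul] at h

lemma L2norm_pderivX_remX_le (hn : 0 < n) (hw : LipBdd w)
    (hs : ∀ y, ContDiff ℝ 2 fun x => w (x, y)) (hc : Continuous (pderivX (pderivX w))) :
    L2norm (pderivX (remX n w)) ≤ (n : ℝ)⁻¹ * L2norm (pderivX (pderivX w)) :=
  L2norm_le_of_slices (hw.remX hn).sqInt_pderivX (sqInt_of_continuous hc) (by positivity)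
    fun y => integral_deriv_sub_nodal_sq_le hn (hs y)

lemma L2norm_remX_le_sq (hn : 0 < n) (hw : LipBdd w)
    (hs : ∀ y, ContDiff ℝ 2 fun x => w (x, y)) (hc : Continuous (pderivX (pderivX w))) :
    L2norm (remX n w) ≤ (n : ℝ)⁻¹ ^ 2 * L2norm (pderivX (pderivX w)) := by
  refine (L2norm_remX_le hn hw fun y => (hs y).of_le (by norm_num)).trans ?_
  rw [sq, mul_assoc]
  gcongr
  exact L2norm_pderivX_remX_le hn hw hs hc

lemma L2norm_pderivY_remY_le (hn : 0 < n) (hw : LipBdd w)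
    (hs : ∀ x, ContDiff ℝ 2 fun y => w (x, y)) (hc : Continuous (pderivY (pderivY w))) :
    L2norm (pderivY (remY n w)) ≤ (n : ℝ)⁻¹ * L2norm (pderivY (pderivY w)) := by
  have h := L2norm_pderivX_remX_le hn hw.comp_swap hs (hc.comp continuous_swap)
  rw [← L2norm_comp_swap (pderivY (remY n w)), ← L2norm_comp_swap (pderivY (pderivY w))]
  exact h

lemma L2norm_remY_le_sq (hn : 0 < n) (hw : LipBdd w)
    (hs : ∀ x, ContDiff ℝ 2 fun y => w (x, y)) (hc : Continuous (pderivY (pderivY w))) :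
    L2norm (remY n w) ≤ (n : ℝ)⁻¹ ^ 2 * L2norm (pderivY (pderivY w)) := by
  have h := L2norm_remX_le_sq hn hw.comp_swap hs (hc.comp continuous_swap)
  rw [← L2norm_comp_swap (remY n w), ← L2norm_comp_swap (pderivY (pderivY w))]
  exact h

lemma pderivX_remY (hw : Differentiable ℝ w) : pderivX (remY n w) = remY n (pderivX w) := by
  ext p
  have hd : ∀ y, HasDerivAt (fun x => w (x, y)) (pderivX w (p.1, y)) p.1 := fun y => by
    rw [pderivX_eq_fderiv (hw _)]
    exact (hw (p.1, y)).hasDerivAt_fst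
  exact ((hd p.2).sub (HasDerivAt.fun_sum (u := range (n + 1))
    fun j _ => (hd ((j : ℝ) / n)).mul_const (hat n j p.2))).deriv

lemma pderivY_remX (hw : Differentiable ℝ w) : pderivY (remX n w) = remX n (pderivY w) := by
  ext p
  have hd : ∀ x, HasDerivAt (fun y => w (x, y)) (pderivY w (x, p.2)) p.2 := fun x => by
    rw [pderivY_eq_fderiv (hw _)]
    exact (hw (x, p.2)).hasDerivAt_snd
  exact ((hd p.1).sub (HasDerivAt.fun_sum (u := range (n + 1))
    fun j _ => (hd ((j : ℝ) / n)).mul_const (hat n j p.1))).deriv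

lemma interp_eq_interpX (n k : ℕ) (u : ℝ × ℝ → ℝ) : interp n k u = interpX n (interpY k u) := by
  ext p
  simp only [interp, interpX, interpY, Finset.sum_mul]
  exact Finset.sum_congr rfl fun i _ => Finset.sum_congr rfl fun j _ => by ring

lemma interp_eq_interpY (n k : ℕ) (u : ℝ × ℝ → ℝ) : interp n k u = interpY k (interpX n u) := by
  ext p
  simp only [interp, interpX, interpY, Finset.sum_mul]
  exact Finset.sum_comm

lemma interpX_remY (n k : ℕ) (u : ℝ × ℝ → ℝ) (p : ℝ × ℝ) :
    interpX n (remY k u) p = interpX n u p - interp n k u p := by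
  rw [interp_eq_interpX]
  simp only [interpX, remY, sub_mul, Finset.sum_sub_distrib]

lemma interpY_remX (n k : ℕ) (u : ℝ × ℝ → ℝ) (p : ℝ × ℝ) :
    interpY k (remX n u) p = interpY k u p - interp n k u p := by
  rw [interp_eq_interpY]
  simp only [interpY, remX, sub_mul, Finset.sum_sub_distrib]

lemma remX_remY_comm (n k : ℕ) (u : ℝ × ℝ → ℝ) : remX n (remY k u) = remY k (remX n u) := by
  ext p
  rw [remX, remY.eq_def k (remX n u), interpX_remY, interpY_remX, remX, remY]
  ring

lemma contDiff_remY_slice {d : WithTop ℕ∞} (hu : ContDiff ℝ d u) (y : ℝ) :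
    ContDiff ℝ d fun x => remY k u (x, y) := by
  have h : ∀ t, ContDiff ℝ d fun x => u (x, t) := fun t => by fun_prop
  exact (h y).sub (ContDiff.sum fun j _ => (h _).mul (contDiff_const (c := hat k j y)))

lemma contDiff_remX_slice {d : WithTop ℕ∞} (hu : ContDiff ℝ d u) (x : ℝ) :
    ContDiff ℝ d fun y => remX k u (x, y) := by
  have h : ∀ t, ContDiff ℝ d fun y => u (t, y) := fun t => by fun_prop
  exact (h x).sub (ContDiff.sum fun j _ => (h _).mul (contDiff_const (c := hat k j x)))

lemma L2norm_pderivX_remX_remY_le (hn : 0 < n) (hk : 0 < k) (hu : ContDiff ℝ 4 u)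
    (hsupp : HasCompactSupport u) :
    L2norm (pderivX (remX n (remY k u))) ≤ (n : ℝ)⁻¹ * ((k : ℝ)⁻¹ ^ 2 * L2norm (uxxyy u)) := by
  have h3 : ContDiff ℝ (3 + 1) u := hu.of_le (by norm_num)
  have hx : ContDiff ℝ (2 + 1) (pderivX u) := h3.pderivX.of_le (by norm_num)
  have hxx : ContDiff ℝ 2 (pderivX (pderivX u)) := hx.pderivX
  have sx : HasCompactSupport (pderivX u) := hsupp.pderivX (hu.differentiable (by norm_num))
  have lu : LipBdd u := .of_contDiff (hu.of_le (by norm_num)) hsupp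
  have lxx : LipBdd (pderivX (pderivX u)) :=
    .of_contDiff (hxx.of_le (by norm_num)) (sx.pderivX (hx.differentiable (by norm_num)))
  have e : pderivX (pderivX (remY k u)) = remY k (pderivX (pderivX u)) := by
    rw [pderivX_remY (hu.differentiable (by norm_num)),
      pderivX_remY (hx.differentiable (by norm_num))]
  refine (L2norm_pderivX_remX_le hn (lu.remY hk)
    (contDiff_remY_slice (hu.of_le (by norm_num))) (e ▸ (lxx.remY hk).continuous)).trans ?_
  rw [e, uxxyy_eq hu]
  gcongr
  have hxxy : ContDiff ℝ (1 + 1) (pderivX (pderivX u)) := hxx.of_le (by norm_num)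
  have hc : ContDiff ℝ (0 + 1) (pderivY (pderivX (pderivX u))) := hxxy.pderivY.of_le (by norm_num)
  exact L2norm_remY_le_sq hk lxx (fun x => by fun_prop) hc.pderivY.continuous

lemma L2norm_remX_remY_le (hn : 0 < n) (hk : 0 < k) (hu : ContDiff ℝ 4 u)
    (hsupp : HasCompactSupport u) :
    L2norm (remX n (remY k u)) ≤ (n : ℝ)⁻¹ * ((k : ℝ)⁻¹ ^ 2 * L2norm (uxxyy u)) := by
  have lu : LipBdd u := .of_contDiff (hu.of_le (by norm_num)) hsupp
  refine (L2norm_remX_le hn (lu.remY hk) (contDiff_remY_slice (hu.of_le (by norm_num)))).trans ?_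
  refine le_trans ?_ (L2norm_pderivX_remX_remY_le hn hk hu hsupp)
  exact mul_le_of_le_one_left (L2norm_nonneg _) (inv_le_one_of_one_le₀ (by exact_mod_cast hn))

lemma L2norm_pderivY_remX_remY_le (hn : 0 < n) (hk : 0 < k) (hu : ContDiff ℝ 4 u)
    (hsupp : HasCompactSupport u) :
    L2norm (pderivY (remX n (remY k u))) ≤ (k : ℝ)⁻¹ * ((n : ℝ)⁻¹ ^ 2 * L2norm (uxxyy u)) := by
  have h3 : ContDiff ℝ (3 + 1) u := hu.of_le (by norm_num)
  have hy : ContDiff ℝ (2 + 1) (pderivY u) := h3.pderivY.of_le (by norm_num)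
  have hyy : ContDiff ℝ 2 (pderivY (pderivY u)) := hy.pderivY
  have sy : HasCompactSupport (pderivY u) := hsupp.pderivY (hu.differentiable (by norm_num))
  have lu : LipBdd u := .of_contDiff (hu.of_le (by norm_num)) hsupp
  have lyy : LipBdd (pderivY (pderivY u)) :=
    .of_contDiff (hyy.of_le (by norm_num)) (sy.pderivY (hy.differentiable (by norm_num)))
  have e : pderivY (pderivY (remX n u)) = remX n (pderivY (pderivY u)) := by
    rw [pderivY_remX (hu.differentiable (by norm_num)),
      pderivY_remX (hy.differentiable (by norm_num))]
  rw [remX_remY_comm]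
  refine (L2norm_pderivY_remY_le hk (lu.remX hn)
    (contDiff_remX_slice (hu.of_le (by norm_num))) (e ▸ (lyy.remX hn).continuous)).trans ?_
  rw [e]
  gcongr
  have hyyx : ContDiff ℝ (1 + 1) (pderivY (pderivY u)) := hyy.of_le (by norm_num)
  have hc : ContDiff ℝ (0 + 1) (pderivX (pderivY (pderivY u))) := hyyx.pderivX.of_le (by norm_num)
  exact L2norm_remX_le_sq hn lyy (fun x => by fun_prop) hc.pderivX.continuous

end Remainders

/-- The sum of the `L²` norms of a function and of its partial derivatives. -/
def h1Sum (v : ℝ × ℝ → ℝ) : ℝ := L2norm (pderivX v) + L2norm (pderivY v) + L2norm v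

section H1Sum

variable {u v w : ℝ × ℝ → ℝ} {n k : ℕ}

lemma h1Sum_add_le (hv : LipBdd v) (hw : LipBdd w) :
    h1Sum (fun p => v p + w p) ≤ h1Sum v + h1Sum w := by
  unfold h1Sum
  rw [L2norm_congr_ae (ae_restrict_of_ae (hv.pderivX_add_ae hw)),
    L2norm_congr_ae (ae_restrict_of_ae (hv.pderivY_add_ae hw))]
  linarith [L2norm_add_le hv.sqInt hw.sqInt, L2norm_add_le hv.sqInt_pderivX hw.sqInt_pderivX,
    L2norm_add_le hv.sqInt_pderivY hw.sqInt_pderivY]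

lemma h1Sum_sub_le (hv : LipBdd v) (hw : LipBdd w) :
    h1Sum (fun p => v p - w p) ≤ h1Sum v + h1Sum w := by
  unfold h1Sum
  rw [L2norm_congr_ae (ae_restrict_of_ae (hv.pderivX_sub_ae hw)),
    L2norm_congr_ae (ae_restrict_of_ae (hv.pderivY_sub_ae hw))]
  linarith [L2norm_sub_le hv.sqInt hw.sqInt, L2norm_sub_le hv.sqInt_pderivX hw.sqInt_pderivX,
    L2norm_sub_le hv.sqInt_pderivY hw.sqInt_pderivY]

lemma h1Sum_sum_le {ι : Type*} (s : Finset ι) {F : ι → ℝ × ℝ → ℝ} (hF : ∀ i ∈ s, LipBdd (F i)) :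
    h1Sum (fun p => ∑ i ∈ s, F i p) ≤ ∑ i ∈ s, h1Sum (F i) := by
  classical
  induction s using Finset.induction_on with
  | empty => simp [h1Sum, L2norm, pderivX, pderivY]
  | insert a s ha ih =>
    simp_rw [Finset.sum_insert ha]
    have hs : ∀ i ∈ s, LipBdd (F i) := fun i hi => hF i (by simp [hi])
    exact (h1Sum_add_le (hF a (by simp)) (LipBdd.sum s hs)).trans (by gcongr; exact ih hs)

lemma h1Sum_remX_le (hn : 0 < n) (hu : ContDiff ℝ 4 u) (hsupp : HasCompactSupport u) :
    h1Sum (remX n u) ≤ 2 * (n : ℝ)⁻¹ * semi2 u := by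
  have hu2 : ContDiff ℝ (1 + 1) u := hu.of_le (by norm_num)
  have hx : ContDiff ℝ (0 + 1) (pderivX u) := hu2.pderivX.of_le (by norm_num)
  have hy : ContDiff ℝ 1 (pderivY u) := hu2.pderivY
  have hd : Differentiable ℝ u := hu.differentiable (by norm_num)
  have lu : LipBdd u := .of_contDiff (hu.of_le (by norm_num)) hsupp
  have ly : LipBdd (pderivY u) := .of_contDiff hy (hsupp.pderivY hd)
  have hu' : ContDiff ℝ 2 u := hu.of_le (by norm_num)
  have b1 : L2norm (pderivX (remX n u)) ≤ (n : ℝ)⁻¹ * L2norm (pderivX (pderivX u)) :=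
    L2norm_pderivX_remX_le hn lu (fun y => by fun_prop) hx.pderivX.continuous
  have b2 : L2norm (pderivY (remX n u)) ≤ (n : ℝ)⁻¹ * L2norm (pderivX (pderivY u)) := by
    have hs : ∀ y, ContDiff ℝ 1 fun x => pderivY u (x, y) := fun y => by fun_prop
    rw [pderivY_remX hd]
    refine (L2norm_remX_le hn ly hs).trans ?_
    gcongr
    exact L2norm_pderivX_remX_le_pderivX hn ly hs
  have b3 : L2norm (remX n u) ≤ (n : ℝ)⁻¹ * L2norm (pderivX (pderivX u)) := by
    refine (L2norm_remX_le hn lu fun y => (hu.of_le (by norm_num)).comp (by fun_prop)).trans ?_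
    refine le_trans ?_ b1
    exact mul_le_of_le_one_left (L2norm_nonneg _) (inv_le_one_of_one_le₀ (by exact_mod_cast hn))
  have p1 : 0 ≤ (n : ℝ)⁻¹ * L2norm (pderivX (pderivY u)) :=
    mul_nonneg (by positivity) (L2norm_nonneg _)
  have p2 : 0 ≤ (n : ℝ)⁻¹ * L2norm (pderivY (pderivY u)) :=
    mul_nonneg (by positivity) (L2norm_nonneg _)
  unfold h1Sum semi2
  linarith

lemma h1Sum_remX_remY_le (hn : 0 < n) (hk : 0 < k) (hu : ContDiff ℝ 4 u)
    (hsupp : HasCompactSupport u) :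
    h1Sum (remX n (remY k u))
      ≤ (2 * (n : ℝ)⁻¹ * (k : ℝ)⁻¹ ^ 2 + (n : ℝ)⁻¹ ^ 2 * (k : ℝ)⁻¹) * L2norm (uxxyy u) := by
  have b1 := L2norm_pderivX_remX_remY_le hn hk hu hsupp
  have b2 := L2norm_pderivY_remX_remY_le hn hk hu hsupp
  have b3 := L2norm_remX_remY_le hn hk hu hsupp
  unfold h1Sum
  linarith

end H1Sum

section MultiscaleSpace

variable {n k i m N : ℕ} {u v : ℝ × ℝ → ℝ}

lemma hat_refine (hn : 0 < n) (hi : 1 ≤ i) (x : ℝ) :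
    hat n i x = hat (2 * n) (2 * i) x + 1 / 2 * hat (2 * n) (2 * i - 1) x
      + 1 / 2 * hat (2 * n) (2 * i + 1) x := by
  have hn2 : 0 < 2 * n := by lia
  rw [hat_eq_max hn, hat_eq_max hn2, hat_eq_max hn2, hat_eq_max hn2]
  push_cast [Nat.cast_sub (show 1 ≤ 2 * i by lia)]
  obtain ⟨s, hs⟩ : ∃ s : ℝ, s = n * x - i := ⟨_, rfl⟩
  rw [← hs, show (2 : ℝ) * n * x - 2 * i = 2 * s by rw [hs]; ring,
    show (2 : ℝ) * n * x - (2 * i - 1) = 2 * s + 1 by rw [hs]; ring,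
    show (2 : ℝ) * n * x - (2 * i + 1) = 2 * s - 1 by rw [hs]; ring]
  rcases abs_cases s with ⟨h1, _⟩ | ⟨h1, _⟩ <;> rcases abs_cases (2 * s) with ⟨h2, _⟩ | ⟨h2, _⟩ <;>
  rcases abs_cases (2 * s + 1) with ⟨h3, _⟩ | ⟨h3, _⟩ <;>
  rcases abs_cases (2 * s - 1) with ⟨h4, _⟩ | ⟨h4, _⟩ <;> rw [h1, h2, h3, h4] <;>
  grind

lemma hat_eq_zero_of_notMem (hi : i ∈ Icc 1 (n - 1)) {x : ℝ} (hx : x ∉ Set.Ioo (0 : ℝ) 1) :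
    hat n i x = 0 := by
  rw [mem_Icc] at hi
  have h1 : (1 : ℝ) ≤ i := by exact_mod_cast hi.1
  have h2 : (i : ℝ) + 1 ≤ n := by exact_mod_cast (show i + 1 ≤ n by lia)
  rw [hat_eq_max (by lia), max_eq_left]
  rw [Set.mem_Ioo, not_and_or, not_lt, not_lt] at hx
  rcases hx with hx | hx
  · have := abs_le.1 (le_refl |(n : ℝ) * x - i|)
    nlinarith
  · have := abs_le.1 (le_refl |(n : ℝ) * x - i|)
    nlinarith

lemma lipBdd_and_eq_zero_of_mem_msSpace (hv : v ∈ msSpace N k) :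
    LipBdd v ∧ ∀ p, p ∉ Omega2 → v p = 0 := by
  induction hv using Submodule.span_induction with
  | mem g hg =>
    obtain ⟨l, -, i, hi, j, hj, rfl⟩ := hg
    have hi' := mem_Icc.1 hi
    have hj' := mem_Icc.1 hj
    refine ⟨(LipBdd.hat_fst (by lia) i).mul (LipBdd.hat_snd (by lia) j), fun p hp => ?_⟩
    rw [Omega2, Set.mem_prod, not_and_or] at hp
    rcases hp with hp | hp
    · simp only [hat_eq_zero_of_notMem hi hp, zero_mul]
    · simp only [hat_eq_zero_of_notMem hj hp, mul_zero]
  | zero => exact ⟨.const 0, fun _ _ => rfl⟩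
  | add v w _ _ hv hw =>
    exact ⟨hv.1.add hw.1, fun p hp => by rw [Pi.add_apply, hv.2 p hp, hw.2 p hp, add_zero]⟩
  | smul c v _ hv =>
    exact ⟨(LipBdd.const c).mul hv.1, fun p hp => by rw [Pi.smul_apply, hv.2 p hp, smul_zero]⟩

lemma hat_mul_hat_mem_msSpace (hi : i < m) {a b : ℕ} (ha : a ∈ Icc 1 (2 ^ (i + 1) - 1))
    (hb : b ∈ Icc 1 (2 ^ (m - i) - 1)) :
    (fun p : ℝ × ℝ => hat (2 ^ (i + 1)) a p.1 * hat (2 ^ (m - i)) b p.2)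
      ∈ msSpace (2 ^ m) (m - 1) := by
  have e1 : 2 ^ m / 2 ^ (m - 1 - i) = 2 ^ (i + 1) := by
    rw [Nat.pow_div (by lia) two_pos]
    congr 1
    lia
  have e2 : 2 ^ m / 2 ^ (m - 1 - (m - 1 - i)) = 2 ^ (m - i) := by
    rw [Nat.pow_div (by lia) two_pos]
    congr 1
    lia
  refine Submodule.subset_span ⟨m - 1 - i, mem_range.2 (by lia), a, ?_, b, ?_, ?_⟩
  · rwa [e1]
  · rwa [e2]
  · rw [e1, e2]

lemma coarse_hat_mul_hat_mem_msSpace (hi : i < m) {a b : ℕ} (ha : a ∈ Icc 1 (2 ^ i - 1))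
    (hb : b ∈ Icc 1 (2 ^ (m - i) - 1)) :
    (fun p : ℝ × ℝ => hat (2 ^ i) a p.1 * hat (2 ^ (m - i)) b p.2)
      ∈ msSpace (2 ^ m) (m - 1) := by
  rw [mem_Icc] at ha
  have e : (fun p : ℝ × ℝ => hat (2 ^ i) a p.1 * hat (2 ^ (m - i)) b p.2)
      = (fun p : ℝ × ℝ => hat (2 ^ (i + 1)) (2 * a) p.1 * hat (2 ^ (m - i)) b p.2)
        + (1 / 2 : ℝ) • (fun p : ℝ × ℝ =>
          hat (2 ^ (i + 1)) (2 * a - 1) p.1 * hat (2 ^ (m - i)) b p.2)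
        + (1 / 2 : ℝ) • (fun p : ℝ × ℝ =>
          hat (2 ^ (i + 1)) (2 * a + 1) p.1 * hat (2 ^ (m - i)) b p.2) := by
    ext p
    simp only [Pi.add_apply, Pi.smul_apply, smul_eq_mul]
    rw [hat_refine (by positivity) ha.1, ← pow_succ']
    ring
  have h : ∀ c, 1 ≤ c → c + 1 ≤ 2 ^ i * 2 → c ∈ Icc 1 (2 ^ (i + 1) - 1) := fun c h1 h2 =>
    mem_Icc.2 ⟨h1, by rw [pow_succ]; lia⟩
  rw [e]
  exact add_mem (add_mem (hat_mul_hat_mem_msSpace hi (h _ (by lia) (by lia)) hb)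
    (Submodule.smul_mem _ _ (hat_mul_hat_mem_msSpace hi (h _ (by lia) (by lia)) hb)))
    (Submodule.smul_mem _ _ (hat_mul_hat_mem_msSpace hi (h _ (by lia) (by lia)) hb))

lemma interp_mem_of_vanishOnBoundary {V : Submodule ℝ (ℝ × ℝ → ℝ)} (hn : 0 < n) (hk : 0 < k)
    (hu : VanishOnBoundary u)
    (hV : ∀ a ∈ Icc 1 (n - 1), ∀ b ∈ Icc 1 (k - 1),
      (fun p : ℝ × ℝ => hat n a p.1 * hat k b p.2) ∈ V) :
    interp n k u ∈ V := by
  have e : interp n k u = ∑ a ∈ range (n + 1), ∑ b ∈ range (k + 1),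
      u ((a : ℝ) / n, (b : ℝ) / k) • fun p : ℝ × ℝ => hat n a p.1 * hat k b p.2 := by
    ext p
    simp only [interp, Finset.sum_apply, Pi.smul_apply, smul_eq_mul, mul_assoc]
  rw [e]
  refine sum_mem fun a ha => sum_mem fun b hb => ?_
  rw [mem_range] at ha hb
  have hn' : (0 : ℝ) < n := by exact_mod_cast hn
  have hk' : (0 : ℝ) < k := by exact_mod_cast hk
  by_cases h : a ∈ Icc 1 (n - 1) ∧ b ∈ Icc 1 (k - 1)
  · exact V.smul_mem _ (hV a h.1 b h.2)
  · have ha' : (a : ℝ) ≤ n := by exact_mod_cast Nat.lt_succ_iff.1 ha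
    have hb' : (b : ℝ) ≤ k := by exact_mod_cast Nat.lt_succ_iff.1 hb
    rw [hu, zero_smul]
    · exact zero_mem V
    · exact ⟨⟨by positivity, by rwa [div_le_one hn']⟩, ⟨by positivity, by rwa [div_le_one hk']⟩⟩
    · rw [mem_Icc, mem_Icc] at h
      have hc : a = 0 ∨ a = n ∨ b = 0 ∨ b = k := by lia
      rcases hc with rfl | rfl | rfl | rfl <;> simp [hn'.ne', hk'.ne']

end MultiscaleSpace

section Interpolant

variable {u : ℝ × ℝ → ℝ}

/-- The multiscale interpolant, written as a telescoping sum over the levels in `x`. -/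
def levelInterp (m : ℕ) (u : ℝ × ℝ → ℝ) : ℝ × ℝ → ℝ := fun p =>
  ∑ i ∈ range m, (interp (2 ^ (i + 1)) (2 ^ (m - i)) u p - interp (2 ^ i) (2 ^ (m - i)) u p)

lemma levelInterp_mem_msSpace (m : ℕ) (hu : VanishOnBoundary u) :
    levelInterp m u ∈ msSpace (2 ^ m) (m - 1) := by
  have e : levelInterp m u = ∑ i ∈ range m,
      (interp (2 ^ (i + 1)) (2 ^ (m - i)) u - interp (2 ^ i) (2 ^ (m - i)) u) := by
    ext p
    simp only [levelInterp, Finset.sum_apply, Pi.sub_apply]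
  rw [e]
  refine sum_mem fun i hi => sub_mem ?_ ?_
  · exact interp_mem_of_vanishOnBoundary (by positivity) (by positivity) hu
      fun a ha b hb => hat_mul_hat_mem_msSpace (mem_range.1 hi) ha hb
  · exact interp_mem_of_vanishOnBoundary (by positivity) (by positivity) hu
      fun a ha b hb => coarse_hat_mul_hat_mem_msSpace (mem_range.1 hi) ha hb

lemma interpX_one_eq_zero (hu : VanishOnBoundary u) {p : ℝ × ℝ} (hp : p ∈ Omega2) :
    interpX 1 u p = 0 := by
  have hy : p.2 ∈ Set.Icc (0 : ℝ) 1 := Set.Ioo_subset_Icc_self hp.2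
  have h0 : u (0, p.2) = 0 := hu _ ⟨by simp, hy⟩ (by simp)
  have h1 : u (1, p.2) = 0 := hu _ ⟨by simp, hy⟩ (by simp)
  simp [interpX, Finset.sum_range_succ, h0, h1]

lemma sub_levelInterp_eq (m : ℕ) (hu : VanishOnBoundary u) :
    Set.EqOn (fun p => u p - levelInterp m u p)
      (fun p => remX (2 ^ m) u p + ∑ i ∈ range m,
        (remX (2 ^ i) (remY (2 ^ (m - i)) u) p - remX (2 ^ (i + 1)) (remY (2 ^ (m - i)) u) p))
      Omega2 := by
  intro p hp
  have ht := Finset.sum_range_sub (fun i => interpX (2 ^ i) u p) m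
  rw [pow_zero, interpX_one_eq_zero hu hp, sub_zero] at ht
  simp only [remX, levelInterp, interpX_remY]
  rw [← ht, sub_add, ← Finset.sum_sub_distrib]
  congr 1
  exact Finset.sum_congr rfl fun i _ => by ring

lemma h1Sum_level_le {m i : ℕ} (hi : i < m) (hu : ContDiff ℝ 4 u) (hs : HasCompactSupport u) :
    h1Sum (fun p => remX (2 ^ i) (remY (2 ^ (m - i)) u) p
        - remX (2 ^ (i + 1)) (remY (2 ^ (m - i)) u) p)
      ≤ ((2 : ℝ) ^ m)⁻¹ * L2norm (uxxyy u) * (4 * (2 ^ i / 2 ^ m) + 2 * (1 / 2) ^ i) := by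
  have lu : LipBdd u := .of_contDiff (hu.of_le (by norm_num)) hs
  have hk : 0 < 2 ^ (m - i) := by positivity
  have b1 := h1Sum_remX_remY_le (n := 2 ^ i) (by positivity) hk hu hs
  have b2 := h1Sum_remX_remY_le (n := 2 ^ (i + 1)) (by positivity) hk hu hs
  have b3 := h1Sum_sub_le ((lu.remY hk).remX (n := 2 ^ i) (by positivity))
    ((lu.remY hk).remX (n := 2 ^ (i + 1)) (by positivity))
  push_cast at b1 b2
  have hle : ((2 : ℝ) ^ (i + 1))⁻¹ ≤ (2 ^ i)⁻¹ := by gcongr <;> norm_num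
  have hmono : (2 * ((2 : ℝ) ^ (i + 1))⁻¹ * (2 ^ (m - i))⁻¹ ^ 2
      + (2 ^ (i + 1))⁻¹ ^ 2 * (2 ^ (m - i))⁻¹) * L2norm (uxxyy u)
      ≤ (2 * ((2 : ℝ) ^ i)⁻¹ * (2 ^ (m - i))⁻¹ ^ 2
      + (2 ^ i)⁻¹ ^ 2 * (2 ^ (m - i))⁻¹) * L2norm (uxxyy u) := by
    gcongr
    exact L2norm_nonneg _
  have e : (2 : ℝ) ^ m = 2 ^ i * 2 ^ (m - i) := by rw [← pow_add]; congr 1; lia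
  refine (b3.trans (add_le_add b1 (b2.trans hmono))).trans_eq ?_
  rw [e, one_div_pow]
  have ha : (2 : ℝ) ^ i ≠ 0 := by positivity
  have hb : (2 : ℝ) ^ (m - i) ≠ 0 := by positivity
  generalize (2 : ℝ) ^ i = a at *
  generalize (2 : ℝ) ^ (m - i) = b at *
  field_simp
  ring

lemma energyNorm_sub_levelInterp_le (m : ℕ) (hu : ContDiff ℝ 4 u) (hs : HasCompactSupport u)
    (h0 : VanishOnBoundary u) :
    energyNorm (fun p => u p - levelInterp m u p)
      ≤ 8 * ((2 : ℝ) ^ m)⁻¹ * (semi2 u + L2norm (uxxyy u)) := by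
  have lu : LipBdd u := .of_contDiff (hu.of_le (by norm_num)) hs
  have l1 : LipBdd (remX (2 ^ m) u) := lu.remX (by positivity)
  have l2 : ∀ i ∈ range m, LipBdd (fun p => remX (2 ^ i) (remY (2 ^ (m - i)) u) p
      - remX (2 ^ (i + 1)) (remY (2 ^ (m - i)) u) p) := fun i _ =>
    ((lu.remY (by positivity)).remX (by positivity)).sub
      ((lu.remY (by positivity)).remX (by positivity))
  have l3 := LipBdd.sum (range m) l2
  have hZ := L2norm_nonneg (uxxyy u)
  have hS : 0 ≤ semi2 u :=
    add_nonneg (add_nonneg (L2norm_nonneg _) (L2norm_nonneg _)) (L2norm_nonneg _)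
  have hpos : 0 < (2 : ℝ) ^ m := by positivity
  rw [energyNorm_congr (sub_levelInterp_eq m h0)]
  have b1 := h1Sum_remX_le (n := 2 ^ m) (by positivity) hu hs
  push_cast at b1
  have b2 : ∑ i ∈ range m, h1Sum (fun p => remX (2 ^ i) (remY (2 ^ (m - i)) u) p
        - remX (2 ^ (i + 1)) (remY (2 ^ (m - i)) u) p)
      ≤ ((2 : ℝ) ^ m)⁻¹ * L2norm (uxxyy u) * 8 := by
    refine (Finset.sum_le_sum fun i hi => h1Sum_level_le (mem_range.1 hi) hu hs).trans ?_
    rw [← Finset.mul_sum, Finset.sum_add_distrib, ← Finset.mul_sum, ← Finset.mul_sum,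
      ← Finset.sum_div, geom_sum_eq (by norm_num : (2 : ℝ) ≠ 1),
      geom_sum_eq (by norm_num : (1 / 2 : ℝ) ≠ 1)]
    gcongr
    have h1 : ((2 : ℝ) ^ m - 1) / (2 - 1) / 2 ^ m ≤ 1 := by
      rw [div_le_one hpos]
      norm_num
    have h2 : ((1 / 2 : ℝ) ^ m - 1) / (1 / 2 - 1) ≤ 2 := by
      have : 0 < (1 / 2 : ℝ) ^ m := by positivity
      rw [div_le_iff_of_neg (by norm_num)]
      linarith
    linarith
  refine (energyNorm_le (l1.add l3)).trans ?_
  refine ((h1Sum_add_le l1 l3).trans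
    (add_le_add b1 ((h1Sum_sum_le _ l2).trans b2))).trans ?_
  have : 0 ≤ ((2 : ℝ) ^ m)⁻¹ * semi2 u := by positivity
  linarith

end Interpolant

/-- Error bound for the Galerkin approximation of a globally smooth solution. -/
lemma energyNorm_sub_galerkin_le {m : ℕ} {u f uh : ℝ × ℝ → ℝ} (hu : ContDiff ℝ 4 u)
    (hs : HasCompactSupport u) (h0 : VanishOnBoundary u)
    (hf : ∀ p ∈ Omega2, -(pderivX (pderivX u) p + pderivY (pderivY u) p) + u p = f p)
    (huh : uh ∈ msSpace (2 ^ m) (m - 1))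
    (hG : ∀ v ∈ msSpace (2 ^ m) (m - 1), Bform uh v = ∫ p in Omega2, f p * v p) :
    energyNorm (fun p => u p - uh p) ≤ 8 * ((2 : ℝ) ^ m)⁻¹ * (semi2 u + L2norm (uxxyy u)) := by
  have hI := levelInterp_mem_msSpace m h0
  have hd : (fun p => uh p - levelInterp m u p) ∈ msSpace (2 ^ m) (m - 1) := sub_mem huh hI
  have ld := lipBdd_and_eq_zero_of_mem_msSpace hd
  have lu : LipBdd u := .of_contDiff (hu.of_le (by norm_num)) hs
  have luh := (lipBdd_and_eq_zero_of_mem_msSpace huh).1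
  refine (energyNorm_le_of_orthogonal lu luh (lipBdd_and_eq_zero_of_mem_msSpace hI).1 ?_).trans
    (energyNorm_sub_levelInterp_le m hu hs h0)
  rw [Bform_sub_left lu luh ld.1, Bform_eq_of_strong (hu.of_le (by norm_num)) hs hf ld.1 ld.2]
  exact sub_eq_zero.2 (hG _ hd).symm

/-- Energy-norm error bound for the multiscale sparse grid finite element method at the
maximal level `k̃ = m − 1`, `N = 2^m`. -/
theorem multiscale_FEM_error_bound :
    ∃ C : ℝ, 0 < C ∧ ∀ m : ℕ, 1 ≤ m →
      ∀ u f : ℝ × ℝ → ℝ, C4Near u → VanishOnBoundary u →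
        (∀ p ∈ Omega2, -(pderivX (pderivX u) p + pderivY (pderivY u) p) + u p = f p) →
        ∀ uh : ℝ × ℝ → ℝ, uh ∈ msSpace (2 ^ m) (m - 1) →
          (∀ v ∈ msSpace (2 ^ m) (m - 1), Bform uh v = ∫ p in Omega2, f p * v p) →
          energyNorm (fun p => u p - uh p) ≤
            C * ((2 : ℝ) ^ m)⁻¹ * (semi2 u + L2norm (uxxyy u)) := by
  refine ⟨8, by norm_num, fun m _ u f hu h0 hf uh huh hG => ?_⟩
  obtain ⟨w, hw, hs, huw⟩ := hu.exists_extension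
  have e : Set.EqOn u w Omega2 := huw.mono Omega2_subset
  have ex := pderivX_congr isOpen_Omega2 e
  have ey := pderivY_congr isOpen_Omega2 e
  have exx := pderivX_congr isOpen_Omega2 ex
  have exy := pderivX_congr isOpen_Omega2 ey
  have eyy := pderivY_congr isOpen_Omega2 ey
  have exxyy := pderivX_congr isOpen_Omega2 (pderivX_congr isOpen_Omega2 eyy)
  have e1 : energyNorm (fun p => u p - uh p) = energyNorm (fun p => w p - uh p) :=
    energyNorm_congr fun p hp => by simp only [e hp]
  have e2 : semi2 u = semi2 w := by
    rw [semi2, semi2, L2norm_congr exx, L2norm_congr exy, L2norm_congr eyy]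
  have e3 : L2norm (uxxyy u) = L2norm (uxxyy w) := L2norm_congr exxyy
  rw [e1, e2, e3]
  refine energyNorm_sub_galerkin_le hw hs (fun p hp hb => ?_) (fun p hp => ?_) huh hG
  · rw [← huw hp, h0 p hp hb]
  · rw [← exx hp, ← eyy hp, ← e hp, hf p hp]
end
end

section
/- Let k be an odd positive integer, m > k, and N = 2^m. Then Σ_{l=0}^{(k−1)/2} (N/2^{l+1})·(N/2^{k−l} − 1) + (N/2^{(k+1)/2} − 1)·(N/2^{(k−1)/2} − 1) + Σ_{l=(k+3)/2}^{k} (N/2^l − 1)·(N/2^{k−l+1}) = (k+2)·N²/2^{k+1} − 2N + 1. That is, the chosen non-redundant basis of the multiscale sparse grid space V^{(k)}_{N,N} for odd k has exactly 2^{−k}(k/2 + 1)N² − 2N + 1 elements. -/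
open Finset

/-- The dyadic quotients `2^m / 2^(j+1)`, `j < n`, telescope. -/
lemma sum_two_pow_div (m n : ℕ) (hn : n ≤ m) :
    ∑ j ∈ range n, ((2 ^ m / 2 ^ (j + 1) : ℕ) : ℤ) = 2 ^ m - ((2 ^ m / 2 ^ n : ℕ) : ℤ) := by
  induction n with
  | zero => simp
  | succ n ih =>
    obtain ⟨q, rfl⟩ := Nat.exists_eq_add_of_le hn
    rw [sum_range_succ, ih (by omega), Nat.pow_div (by omega) two_pos,
      Nat.pow_div (by omega) two_pos, show n + 1 + q - n = q + 1 by omega,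
      show n + 1 + q - (n + 1) = q by omega]
    push_cast
    ring

/-- A product of two dyadic quotients depends only on the sum of the two levels. -/
lemma two_pow_div_mul_two_pow_div {m a b : ℕ} (ha : a ≤ m) (hb : b ≤ m) :
    ((2 ^ m / 2 ^ a : ℕ) : ℤ) * ((2 ^ m / 2 ^ b : ℕ) : ℤ) =
      (((2 ^ m) ^ 2 / 2 ^ (a + b) : ℕ) : ℤ) := by
  rw [← pow_mul, Nat.pow_div ha two_pos, Nat.pow_div hb two_pos, Nat.pow_div (by omega) two_pos,
    ← Nat.cast_mul, ← pow_add]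
  congr 2
  omega

/-- The total size of the first `n` anisotropic blocks of the basis. -/
lemma sum_block_card (k m n : ℕ) (hkm : k < m) (hn : n ≤ k) :
    ∑ l ∈ range n, ((2 ^ m / 2 ^ (l + 1) : ℕ) : ℤ) * (((2 ^ m / 2 ^ (k - l) : ℕ) : ℤ) - 1) =
      n * (((2 ^ m) ^ 2 / 2 ^ (k + 1) : ℕ) : ℤ) - (2 ^ m - ((2 ^ m / 2 ^ n : ℕ) : ℤ)) := by
  have key : ∀ l ∈ range n,
      ((2 ^ m / 2 ^ (l + 1) : ℕ) : ℤ) * (((2 ^ m / 2 ^ (k - l) : ℕ) : ℤ) - 1) =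
        (((2 ^ m) ^ 2 / 2 ^ (k + 1) : ℕ) : ℤ) - ((2 ^ m / 2 ^ (l + 1) : ℕ) : ℤ) := by
    intro l hl
    rw [mem_range] at hl
    rw [mul_sub, mul_one, two_pow_div_mul_two_pow_div (by omega) (by omega),
      show l + 1 + (k - l) = k + 1 by omega]
  rw [sum_congr rfl key, sum_sub_distrib, sum_two_pow_div m n (by omega), sum_const, card_range,
    nsmul_eq_mul]

/-- For odd `k` and `N = 2^m` with `m > k`, the chosen non-redundant basis of the multiscale
sparse grid space `V^{(k)}_{N,N}` has exactly `(k+2)·N²/2^{k+1} − 2N + 1` elements. -/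
theorem multiscale_basis_count_odd (k m N : ℕ) (hodd : k % 2 = 1) (hkm : k < m)
    (hN : N = 2 ^ m) :
    (∑ l ∈ range ((k - 1) / 2 + 1),
        ((N / 2 ^ (l + 1) : ℕ) : ℤ) * (((N / 2 ^ (k - l) : ℕ) : ℤ) - 1)) +
      (((N / 2 ^ ((k + 1) / 2) : ℕ) : ℤ) - 1) * (((N / 2 ^ ((k - 1) / 2) : ℕ) : ℤ) - 1) +
      (∑ l ∈ Finset.Icc ((k + 3) / 2) k,
        (((N / 2 ^ l : ℕ) : ℤ) - 1) * ((N / 2 ^ (k - l + 1) : ℕ) : ℤ)) =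
      ((k : ℤ) + 2) * ((N ^ 2 / 2 ^ (k + 1) : ℕ) : ℤ) - 2 * (N : ℤ) + 1 := by
  obtain ⟨p, rfl⟩ : ∃ p, k = 2 * p + 1 := ⟨k / 2, by omega⟩
  subst hN
  rw [show (2 * p + 1 - 1) / 2 = p by omega, show (2 * p + 1 + 1) / 2 = p + 1 by omega,
    show (2 * p + 1 + 3) / 2 = p + 2 by omega]
  have reflect : ∑ l ∈ Finset.Icc (p + 2) (2 * p + 1),
        (((2 ^ m / 2 ^ l : ℕ) : ℤ) - 1) * ((2 ^ m / 2 ^ (2 * p + 1 - l + 1) : ℕ) : ℤ) =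
      ∑ l ∈ range p, ((2 ^ m / 2 ^ (l + 1) : ℕ) : ℤ) *
        (((2 ^ m / 2 ^ (2 * p + 1 - l) : ℕ) : ℤ) - 1) := by
    refine sum_nbij' (fun l => 2 * p + 1 - l) (fun l => 2 * p + 1 - l) ?_ ?_ ?_ ?_ ?_
    · intro l hl; simp only [mem_Icc, mem_range] at *; omega
    · intro l hl; simp only [mem_Icc, mem_range] at *; omega
    · intro l hl; simp only [mem_Icc] at *; omega
    · intro l hl; simp only [mem_range] at *; omega
    · intro l hl
      rw [mem_Icc] at hl
      rw [show 2 * p + 1 - (2 * p + 1 - l) = l by omega, mul_comm]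
  have middle : ((2 ^ m / 2 ^ (p + 1) : ℕ) : ℤ) * ((2 ^ m / 2 ^ p : ℕ) : ℤ) =
      2 * (((2 ^ m) ^ 2 / 2 ^ (2 * p + 1 + 1) : ℕ) : ℤ) := by
    rw [two_pow_div_mul_two_pow_div (by omega) (by omega), ← pow_mul,
      Nat.pow_div (by omega) two_pos, Nat.pow_div (by omega) two_pos,
      show m * 2 - (p + 1 + p) = m * 2 - (2 * p + 1 + 1) + 1 by omega, pow_succ]
    push_cast
    ring
  rw [reflect, sum_block_card _ m (p + 1) hkm (by omega), sum_block_card _ m p hkm (by omega),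
    sub_mul, mul_sub, middle]
  push_cast
  ring
end
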